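/- arXiv:1501.07613 — 6 statements merged into one kernel-verified Lean document; each statement's English description precedes it below -/
import Mathlib

section
/- Let C be a C*-algebra and c ∈ C. Let A be the closed linear span of {cc* x cc* : x ∈ C} (the hereditary C*-subalgebra of C generated by cc*) and B the closed linear span of {c*c x c*c : x ∈ C} (the hereditary C*-subalgebra generated by c*c). Then A and B are *-isomorphic as C*-algebras. -/
/-- The closed linear span of `{a x a : x ∈ C}`, i.e. the hereditary C*-subalgebra of `C`
generated by the positive element `a`, as a closed subspace. -/
noncomputable def hereditaryClosedSpan {C : Type*} [NonUnitalCStarAlgebra C] (a : C) :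
    Submodule ℂ C :=
  (Submodule.span ℂ {y : C | ∃ x : C, y = a * x * a}).topologicalClosure

/-!
With `|c| = (c* c)^{1/2}`, the map `c x c* ↦ |c| x |c|` is isometric and multiplicative because
`c* c = |c|²`, so it extends to an isomorphism between the closures of `c C c*` and `|c| C |c|`.
Since `p` lies in the closure of `p p* C` for every `p`, the closures of `p C p*` and
`p p* C p p*` agree; for `p = c` and `p = |c|` this identifies the two closed corners with the
hereditary subalgebras generated by `c c*` and by `|c|² = c* c`.
-/

section DenseExtension

variable {𝕜 X A B : Type*} [NormedField 𝕜] [AddCommGroup X] [Module 𝕜 X]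
  [NonUnitalNormedRing A] [Star A] [ContinuousStar A] [NormedSpace 𝕜 A] [CompleteSpace A]
  [NonUnitalNormedRing B] [Star B] [ContinuousStar B] [NormedSpace 𝕜 B] [CompleteSpace B]

/-- The star-algebra isomorphism `A ≃⋆ₐ[𝕜] B` extending `e₁ x ↦ e₂ x`, for linear maps `e₁`, `e₂`
with dense range inducing the same norm on `X`. Instead of a product and a star on `X`, it is only
required that those of `A` and `B` lift to `X` simultaneously. -/
noncomputable def starAlgEquivOfDenseRange (e₁ : X →ₗ[𝕜] A) (e₂ : X →ₗ[𝕜] B)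
    (dense₁ : DenseRange e₁) (dense₂ : DenseRange e₂) (norm_eq : ∀ x, ‖e₂ x‖ = ‖e₁ x‖)
    (lift_mul : ∀ x y, ∃ z, e₁ z = e₁ x * e₁ y ∧ e₂ z = e₂ x * e₂ y)
    (lift_star : ∀ x, ∃ z, e₁ z = star (e₁ x) ∧ e₂ z = star (e₂ x)) :
    A ≃⋆ₐ[𝕜] B :=
  let φ : A ≃ₗᵢ[𝕜] B :=
    (LinearEquiv.refl 𝕜 X).extendOfIsometry e₁ e₂ dense₁ dense₂ norm_eq
  have φ_apply (x : X) : φ (e₁ x) = e₂ x :=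
    (LinearEquiv.refl 𝕜 X).extendOfIsometry_eq e₁ e₂ dense₁ dense₂ norm_eq x
  { φ.toLinearEquiv with
    map_mul' := fun a b ↦ by
      change φ (a * b) = φ a * φ b
      refine dense₁.induction_on₂ (p := fun a b ↦ φ (a * b) = φ a * φ b)
        (isClosed_eq (by fun_prop) (by fun_prop)) (fun x y ↦ ?_) a b
      obtain ⟨z, hz₁, hz₂⟩ := lift_mul x y
      rw [← hz₁, φ_apply, φ_apply, φ_apply, hz₂]
    map_star' := fun a ↦ by
      change φ (star a) = star (φ a)
      refine dense₁.induction_on (p := fun a ↦ φ (star a) = star (φ a)) a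
        (isClosed_eq (by fun_prop) (by fun_prop)) (fun x ↦ ?_)
      obtain ⟨z, hz₁, hz₂⟩ := lift_star x
      rw [← hz₁, φ_apply, φ_apply, hz₂] }

end DenseExtension

section Corner

variable (R : Type*) {A : Type*} [CommSemiring R] [NonUnitalSemiring A] [StarRing A] [Module R A]
  [IsScalarTower R A A] [SMulCommClass R A A]

/-- The star subalgebra `p A p*`. In a C*-algebra it is dense in the hereditary C*-subalgebra
generated by `p p*`. -/
def corner (p : A) : NonUnitalStarSubalgebra R A where
  __ := LinearMap.range (LinearMap.mulLeftRight R (p, star p))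
  mul_mem' := by
    rintro _ _ ⟨x, rfl⟩ ⟨y, rfl⟩
    exact ⟨x * (star p * p) * y, by simp only [LinearMap.mulLeftRight_apply, mul_assoc]⟩
  star_mem' := by
    rintro _ ⟨x, rfl⟩
    exact ⟨star x, by simp only [LinearMap.mulLeftRight_apply, star_mul, star_star, mul_assoc]⟩

variable [TopologicalSpace A] [IsTopologicalSemiring A] [ContinuousStar A] [ContinuousConstSMul R A]

/-- The closure of `p A p*`. For `p` in a C*-algebra this is the hereditary C*-subalgebra generated
by `p p*`. -/
def closedCorner (p : A) : NonUnitalStarSubalgebra R A :=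
  (corner R p).topologicalClosure

instance (p : A) : ContinuousStar (closedCorner R p) :=
  ⟨(continuous_star.comp continuous_subtype_val).subtype_mk _⟩

variable {R}

theorem closedCorner_le_closedCorner {p q : A} (h : p ∈ closure (Set.range (q * ·))) :
    closedCorner R p ≤ closedCorner R q := by
  refine (corner R p).topologicalClosure_minimal ?_ (corner R q).isClosed_topologicalClosure
  rintro _ ⟨y, rfl⟩
  refine map_mem_closure (f := fun z ↦ z * y * star z) (by fun_prop) h ?_
  rintro _ ⟨x, rfl⟩
  exact ⟨x * y * star x, by simp only [LinearMap.mulLeftRight_apply, star_mul, mul_assoc]⟩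

variable (R)

/-- The map `x ↦ p x p*` from `A` into `closedCorner R p`. -/
def toClosedCorner (p : A) : A →ₗ[R] closedCorner R p :=
  (LinearMap.mulLeftRight R (p, star p)).codRestrict (closedCorner R p).toSubmodule
    fun x ↦ (corner R p).le_topologicalClosure ⟨x, rfl⟩

variable {R}

theorem coe_toClosedCorner (p x : A) : (toClosedCorner R p x : A) = p * x * star p := rfl

theorem denseRange_toClosedCorner (p : A) : DenseRange (toClosedCorner R p) := by
  intro y
  rw [closure_subtype, ← Set.range_comp]
  exact y.2

end Corner

section CStarNorm

variable {A : Type*} [NonUnitalNormedRing A] [StarRing A] [CStarRing A]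

theorem norm_mul_eq_norm_mul_of_star_mul_self_eq {p q : A} (h : star p * p = star q * q) (x : A) :
    ‖p * x‖ = ‖q * x‖ := by
  have star_mul_self_eq : star (p * x) * (p * x) = star (q * x) * (q * x) := by
    simp only [star_mul, mul_assoc]
    rw [← mul_assoc (star p), h, mul_assoc]
  rw [← mul_self_inj (norm_nonneg _) (norm_nonneg _), ← CStarRing.norm_star_mul_self,
    star_mul_self_eq, CStarRing.norm_star_mul_self]

theorem norm_conj_eq_norm_conj_of_star_mul_self_eq {p q : A} (h : star p * p = star q * q) (x : A) :
    ‖p * x * star p‖ = ‖q * x * star q‖ :=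
  calc ‖p * x * star p‖ = ‖q * (x * star p)‖ := by
        rw [mul_assoc, norm_mul_eq_norm_mul_of_star_mul_self_eq h]
    _ = ‖p * star (q * x)‖ := by rw [← norm_star, ← mul_assoc, star_mul, star_star]
    _ = ‖q * x * star q‖ := by
        rw [norm_mul_eq_norm_mul_of_star_mul_self_eq h, ← norm_star, star_mul, star_star]

variable {𝕜 : Type*} [NormedField 𝕜] [NormedSpace 𝕜 A] [IsScalarTower 𝕜 A A]
  [SMulCommClass 𝕜 A A] [CompleteSpace A]

instance (p : A) : CompleteSpace (closedCorner 𝕜 p) :=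
  (corner 𝕜 p).isClosed_topologicalClosure.completeSpace_coe

/-- The extension of `p x p* ↦ q x q*` to the closed corners of `p` and `q`. -/
noncomputable def closedCornerEquiv {p q : A} (h : star p * p = star q * q) :
    closedCorner 𝕜 p ≃⋆ₐ[𝕜] closedCorner 𝕜 q :=
  starAlgEquivOfDenseRange (toClosedCorner 𝕜 p) (toClosedCorner 𝕜 q)
    (denseRange_toClosedCorner p) (denseRange_toClosedCorner q)
    (fun x ↦ (norm_conj_eq_norm_conj_of_star_mul_self_eq h x).symm)
    (fun x y ↦ ⟨x * (star p * p) * y,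
      Subtype.ext <| by simp [coe_toClosedCorner, mul_assoc],
      Subtype.ext <| by simp [coe_toClosedCorner, mul_assoc, h]⟩)
    (fun x ↦ ⟨star x, Subtype.ext <| by simp [coe_toClosedCorner, mul_assoc],
      Subtype.ext <| by simp [coe_toClosedCorner, mul_assoc]⟩)

end CStarNorm

theorem abs_mul_one_sub_sq_div_sq_add_sq_sq_le (t : ℝ) {ε : ℝ} (hε : 0 < ε) :
    |t * (1 - t ^ 2 / (t ^ 2 + ε ^ 2)) ^ 2| ≤ ε / 2 := by
  have pos : 0 < t ^ 2 + ε ^ 2 := by positivity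
  have compl : 1 - t ^ 2 / (t ^ 2 + ε ^ 2) = ε ^ 2 / (t ^ 2 + ε ^ 2) := by
    field_simp
    ring
  have am_gm : |t| * ε ≤ (t ^ 2 + ε ^ 2) / 2 := by
    linarith [two_mul_le_add_sq |t| ε, sq_abs t]
  have weight_le_one : ε ^ 2 / (t ^ 2 + ε ^ 2) ≤ 1 := by
    rw [div_le_one pos]
    linarith [sq_nonneg t]
  calc |t * (1 - t ^ 2 / (t ^ 2 + ε ^ 2)) ^ 2|
      = |t| * (ε ^ 2 / (t ^ 2 + ε ^ 2)) ^ 2 := by rw [compl, abs_mul, abs_sq]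
    _ ≤ |t| * (ε ^ 2 / (t ^ 2 + ε ^ 2)) := by
        gcongr
        exact pow_le_of_le_one (by positivity) weight_le_one two_ne_zero
    _ = |t| * ε * ε / (t ^ 2 + ε ^ 2) := by ring
    _ ≤ (t ^ 2 + ε ^ 2) / 2 * ε / (t ^ 2 + ε ^ 2) := by gcongr
    _ = ε / 2 := by field_simp

section CStarAlgebra

variable {C : Type*} [NonUnitalCStarAlgebra C]

theorem sq_norm_sub_mul_cfcₙ_star_mul_self_le (p : C) {g : ℝ → ℝ}
    (hg : ContinuousOn g (quasispectrum ℝ (star p * p))) (hg₀ : g 0 = 0) {M : ℝ}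
    (hM : ∀ t ∈ quasispectrum ℝ (star p * p), |t * (1 - g t) ^ 2| ≤ M) :
    ‖p - p * cfcₙ g (star p * p)‖ ^ 2 ≤ M := by
  set h := star p * p with hh
  have expand : star (p - p * cfcₙ g h) * (p - p * cfcₙ g h) =
      cfcₙ (fun t ↦ t * (1 - g t) ^ 2) h := by
    have poly : (fun t ↦ t * (1 - g t) ^ 2) =
        fun t ↦ t - t * g t - (g t * t - g t * t * g t) := by
      ext t
      ring
    have star_g : star (cfcₙ g h) = cfcₙ g h := (cfcₙ_predicate g h).star_eq
    rw [poly, cfcₙ_sub _ _ h, cfcₙ_sub _ _ h, cfcₙ_sub _ _ h, cfcₙ_mul _ _ h, cfcₙ_mul _ _ h,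
      cfcₙ_mul _ _ h, cfcₙ_mul _ _ h, cfcₙ_id' ℝ h, star_sub, star_mul, star_g, hh]
    simp only [sub_mul, mul_sub, mul_assoc]
    abel
  rw [sq, ← CStarRing.norm_star_mul_self, expand]
  exact norm_cfcₙ_le hM

theorem mem_closure_range_mul_star_self_mul (p : C) :
    p ∈ closure (Set.range (p * star p * ·)) := by
  rw [Metric.mem_closure_range_iff]
  intro δ hδ
  set h := star p * p with hh
  have den_ne_zero (t : ℝ) : t ^ 2 + (δ ^ 2) ^ 2 ≠ 0 := by positivity
  -- `1 - t * k t` is small except near `0`, where the weight `t` (standing for `|p|²`) is small;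
  -- hence `p * (h * k h) = p p* (p * k h)` approximates `p`.
  let k : ℝ → ℝ := fun t ↦ t / (t ^ 2 + (δ ^ 2) ^ 2)
  have hk : Continuous k := continuous_id.div (by fun_prop) den_ne_zero
  have mul_k (t : ℝ) : t * k t = t ^ 2 / (t ^ 2 + (δ ^ 2) ^ 2) := by
    rw [← mul_div_assoc, sq t]
  have factor : p * star p * (p * cfcₙ k h) = p * cfcₙ (fun t ↦ t * k t) h := by
    rw [cfcₙ_mul _ _ h, cfcₙ_id' ℝ h, hh]
    simp only [mul_assoc]
  refine ⟨p * cfcₙ k h, ?_⟩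
  rw [dist_eq_norm, factor]
  refine lt_of_pow_lt_pow_left₀ 2 hδ.le ?_
  calc ‖p - p * cfcₙ (fun t ↦ t * k t) h‖ ^ 2 ≤ δ ^ 2 / 2 :=
        sq_norm_sub_mul_cfcₙ_star_mul_self_le p (by fun_prop) (zero_mul (k 0)) fun t _ ↦ by
          simpa only [mul_k] using abs_mul_one_sub_sq_div_sq_add_sq_sq_le t (sq_pos_of_pos hδ)
    _ < δ ^ 2 := half_lt_self (by positivity)

theorem closedCorner_mul_star_self (p : C) : closedCorner ℂ (p * star p) = closedCorner ℂ p :=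
  le_antisymm (closedCorner_le_closedCorner <| subset_closure ⟨star p, rfl⟩)
    (closedCorner_le_closedCorner <| mem_closure_range_mul_star_self_mul p)

theorem hereditaryClosedSpan_eq_closedCorner {a : C} (ha : IsSelfAdjoint a) :
    hereditaryClosedSpan a = (closedCorner ℂ a).toSubmodule := by
  have span_eq : Submodule.span ℂ {y : C | ∃ x : C, y = a * x * a} = (corner ℂ a).toSubmodule := by
    convert! Submodule.span_eq (corner ℂ a).toSubmodule using 2
    ext y
    simp [corner, ha.star_eq, eq_comm]
  rw [hereditaryClosedSpan, span_eq]
  rfl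

theorem hereditaryClosedSpan_mul_star_self (p : C) :
    hereditaryClosedSpan (p * star p) = (closedCorner ℂ p).toSubmodule := by
  rw [hereditaryClosedSpan_eq_closedCorner (.mul_star_self p), closedCorner_mul_star_self]

theorem exists_isSelfAdjoint_mul_self_eq_star_mul_self (c : C) :
    ∃ s : C, IsSelfAdjoint s ∧ s * s = star c * c := by
  let _ := CStarAlgebra.spectralOrder C
  have := CStarAlgebra.spectralOrderedRing C
  exact ⟨CFC.abs c, (CFC.abs_nonneg c).isSelfAdjoint, CFC.abs_mul_abs c⟩

end CStarAlgebra

theorem stmt2 {C : Type*} [NonUnitalCStarAlgebra C] (c : C) :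
    ∃ f : hereditaryClosedSpan (c * star c) ≃ₗ[ℂ] hereditaryClosedSpan (star c * c),
      (∀ x y z : hereditaryClosedSpan (c * star c),
        (z : C) = (x : C) * (y : C) → (f z : C) = (f x : C) * (f y : C)) ∧
      (∀ x z : hereditaryClosedSpan (c * star c),
        (z : C) = star (x : C) → (f z : C) = star ((f x : C))) := by
  obtain ⟨s, hs, s_sq⟩ := exists_isSelfAdjoint_mul_self_eq_star_mul_self c
  have domain_eq := hereditaryClosedSpan_mul_star_self c
  have codomain_eq : hereditaryClosedSpan (star c * c) = (closedCorner ℂ s).toSubmodule := by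
    rw [← hereditaryClosedSpan_mul_star_self, hs.star_eq, s_sq]
  rw [domain_eq, codomain_eq]
  let φ : closedCorner ℂ c ≃⋆ₐ[ℂ] closedCorner ℂ s :=
    closedCornerEquiv (by rw [hs.star_eq, s_sq])
  refine ⟨{ φ with map_smul' := map_smul φ }, fun (x y z : closedCorner ℂ c) hz ↦ ?_,
    fun (x z : closedCorner ℂ c) hz ↦ ?_⟩
  · obtain rfl : z = x * y := Subtype.ext hz
    exact congrArg Subtype.val (map_mul φ x y)
  · obtain rfl : z = star x := Subtype.ext hz
    exact congrArg Subtype.val (map_star φ x)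
end

section
/- Let A and B be C*-algebras and φ : B → A a linear bijection such that both φ and φ⁻¹ are 2-positive (the induced maps φ ⊗ id₂ : M₂(B) → M₂(A) and φ⁻¹ ⊗ id₂ : M₂(A) → M₂(B) send positive elements to positive elements). Then φ is a complete order isomorphism: for every n ≥ 1, both φ ⊗ idₙ : Mₙ(B) → Mₙ(A) and φ⁻¹ ⊗ idₙ : Mₙ(A) → Mₙ(B) send positive elements to positive elements. -/
/-! Fix `0 ≤ a` in `B` and put `p = φ a`. Applying `φ` to the positive matrix
`[a, a y; y⋆ a, y⋆ a y]` and taking a Schur complement gives, for the regularised inverses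
`g_δ = p (p² + δ²)⁻¹` and `u_δ = g_δ φ(a y)`, the bound `u_δ⋆ p u_δ ≤ φ(y⋆ a y)`, while
`p u_δ → φ(a y)`. The same argument for `φ⁻¹` and the matrix `[p, p u_δ; u_δ⋆ p, u_δ⋆ p u_δ]` bounds
`φ⁻¹(u_δ⋆ p u_δ)` from below by a quantity converging to `y⋆ a y`. Hence `u_δ⋆ p u_δ → φ(y⋆ a y)`,
and by polarization `φ(x⋆ a y)` is the limit of `(g_δ φ(a x))⋆ p (g_δ φ(a y))`. As `x` and `y` run
through a finite family, the latter form a positive matrix, and hence so do the `φ(x⋆ a y)`. Finally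
`a` runs through an approximate unit of `B`. -/

open Filter Topology

section Sesquilinear

variable {V W : Type*} [AddCommGroup V] [Module ℂ V]

lemma sesquilinear_polarization [AddCommGroup W] [Module ℂ W] (S : V →ₗ⋆[ℂ] V →ₗ[ℂ] W) (x y : V) :
    S x y = (1 / 4 : ℂ) • (S (x + y) (x + y) - S (x - y) (x - y)
      - Complex.I • S (x + Complex.I • y) (x + Complex.I • y)
      + Complex.I • S (x - Complex.I • y) (x - Complex.I • y)) := by
  simp only [map_add, map_sub, map_smulₛₗ, LinearMap.add_apply, LinearMap.sub_apply,
    LinearMap.smul_apply, smul_add, smul_sub, smul_smul, RingHom.id_apply, Complex.conj_I]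
  match_scalars <;> ring_nf <;> simp only [Complex.I_sq] <;> norm_num

lemma tendsto_sesquilinear_of_tendsto_diag [NormedAddCommGroup W] [NormedSpace ℂ W] {ι : Type*}
    {l : Filter ι} {S : ι → V →ₗ⋆[ℂ] V →ₗ[ℂ] W} {T : V →ₗ⋆[ℂ] V →ₗ[ℂ] W}
    (h : ∀ x, Tendsto (fun i => S i x x) l (𝓝 (T x x))) (x y : V) :
    Tendsto (fun i => S i x y) l (𝓝 (T x y)) := by
  simp only [sesquilinear_polarization _ x y]
  exact ((((h _).sub (h _)).sub ((h _).const_smul _)).add ((h _).const_smul _)).const_smul _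

/-- The sesquilinear form `(x, y) ↦ (T x)⋆ c (T y)` attached to an element `c` of a star algebra. -/
def conjForm {A : Type*} [NonUnitalRing A] [StarRing A] [Module ℂ A] [StarModule ℂ A]
    [IsScalarTower ℂ A A] [SMulCommClass ℂ A A] (c : A) (T : V →ₗ[ℂ] A) : V →ₗ⋆[ℂ] V →ₗ[ℂ] A :=
  LinearMap.mk₂'ₛₗ (starRingEnd ℂ) (RingHom.id ℂ) (fun x y => star (T x) * c * T y)
    (fun x x' y => by simp only [map_add, star_add, add_mul])
    (fun r x y => by simp only [map_smul, star_smul, smul_mul_assoc, starRingEnd_apply])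
    (fun x y y' => by simp only [map_add, mul_add])
    (fun r x y => by simp only [map_smul, mul_smul_comm, RingHom.id_apply])

end Sesquilinear

section CStarAlgebra

variable {A : Type*} [NonUnitalCStarAlgebra A] [PartialOrder A] [StarOrderedRing A]

-- `CStarAlgebra.nonneg_iff_eq_star_mul_self` does not elaborate on `CStarMatrix`, where instance
-- search picks the entrywise real scalar action; here no scalar action enters the statement.
lemma nonneg_iff_exists_eq_star_mul_self {x : A} : 0 ≤ x ↔ ∃ y, x = star y * y :=
  CStarAlgebra.nonneg_iff_eq_star_mul_self

lemma tendsto_of_tendsto_of_le_of_le_const {ι : Type*} {l : Filter ι} {f s : ι → A} {c : A}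
    (hf : Tendsto f l (𝓝 c)) (hfs : ∀ᶠ i in l, f i ≤ s i) (hsc : ∀ᶠ i in l, s i ≤ c) :
    Tendsto s l (𝓝 c) := by
  rw [tendsto_iff_norm_sub_tendsto_zero] at hf ⊢
  refine squeeze_zero' (.of_forall fun _ => norm_nonneg _) ?_ hf
  filter_upwards [hfs, hsc] with i hfs hsc
  rw [norm_sub_rev, norm_sub_rev (f i)]
  exact CStarAlgebra.norm_le_norm_of_nonneg_of_le (sub_nonneg.mpr hsc) (by gcongr)

lemma norm_sub_mul_sq_le {p x : A} (hx : star x * x ≤ p) (e : A) :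
    ‖x - x * e‖ ^ 2 ≤ (1 + ‖e‖) * ‖p - p * e‖ := by
  obtain ⟨w, hw⟩ := nonneg_iff_exists_eq_star_mul_self.mp (sub_nonneg.mpr hx)
  have hp : p = star w * w + star x * x := by rw [← hw, sub_add_cancel]
  have hle : star (x - x * e) * (x - x * e) ≤ (p - p * e) - star e * (p - p * e) := by
    rw [← sub_nonneg]
    convert star_mul_self_nonneg (w - w * e) using 1
    rw [hp]
    simp only [star_sub, star_mul, mul_sub, sub_mul, mul_add, add_mul, mul_assoc]
    abel
  calc ‖x - x * e‖ ^ 2 = ‖star (x - x * e) * (x - x * e)‖ := by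
        rw [CStarRing.norm_star_mul_self, sq]
    _ ≤ ‖(p - p * e) - star e * (p - p * e)‖ :=
        CStarAlgebra.norm_le_norm_of_nonneg_of_le (star_mul_self_nonneg _) hle
    _ ≤ ‖p - p * e‖ + ‖star e‖ * ‖p - p * e‖ :=
        (norm_sub_le _ _).trans (by gcongr; exact norm_mul_le _ _)
    _ = (1 + ‖e‖) * ‖p - p * e‖ := by rw [norm_star]; ring

lemma tendsto_mul_of_star_mul_self_le {ι : Type*} {l : Filter ι} {e : ι → A} {p x : A} {C : ℝ}
    (hx : star x * x ≤ p) (he : ∀ᶠ i in l, ‖e i‖ ≤ C)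
    (hp : Tendsto (fun i => p * e i) l (𝓝 p)) : Tendsto (fun i => x * e i) l (𝓝 x) := by
  rw [tendsto_iff_norm_sub_tendsto_zero] at hp ⊢
  have hsq : Tendsto (fun i => ‖x * e i - x‖ ^ 2) l (𝓝 0) := by
    refine squeeze_zero' (.of_forall fun _ => by positivity) ?_
      (by simpa only [mul_zero] using hp.const_mul (1 + C))
    filter_upwards [he] with i hi
    rw [norm_sub_rev, norm_sub_rev (p * e i)]
    exact (norm_sub_mul_sq_le hx (e i)).trans (by gcongr)
  simpa only [Real.sqrt_sq (norm_nonneg _), Real.sqrt_zero] using hsq.sqrt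

end CStarAlgebra

section TikhonovInverse

variable {A : Type*} [NonUnitalCStarAlgebra A]

/-- The Tikhonov regularisation `p (p² + δ²)⁻¹` of the inverse of `p`. Unlike `(p + δ)⁻¹` it lies in
`A` even when `A` has no unit. -/
noncomputable def tikhonovInverse (p : A) (δ : ℝ) : A :=
  cfcₙ (fun t : ℝ => t / (t ^ 2 + δ ^ 2)) p

lemma continuous_div_sq_add_sq {δ : ℝ} (hδ : δ ≠ 0) :
    Continuous fun t : ℝ => t / (t ^ 2 + δ ^ 2) :=
  continuous_id.div (by fun_prop) fun t => by positivity

lemma isSelfAdjoint_tikhonovInverse (p : A) (δ : ℝ) : IsSelfAdjoint (tikhonovInverse p δ) :=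
  IsSelfAdjoint.cfcₙ

lemma tikhonovInverse_mul_self {p : A} (hp : IsSelfAdjoint p) {δ : ℝ} (hδ : δ ≠ 0) :
    tikhonovInverse p δ * p = cfcₙ (fun t : ℝ => t / (t ^ 2 + δ ^ 2) * t) p := by
  have hf := continuous_div_sq_add_sq hδ
  rw [cfcₙ_mul (fun t : ℝ => t / (t ^ 2 + δ ^ 2)) (fun t => t) p hf.continuousOn, cfcₙ_id' ℝ p,
    tikhonovInverse]

lemma norm_tikhonovInverse_mul_self_le_one {p : A} (hp : IsSelfAdjoint p) {δ : ℝ} (hδ : δ ≠ 0) :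
    ‖tikhonovInverse p δ * p‖ ≤ 1 := by
  rw [tikhonovInverse_mul_self hp hδ]
  refine norm_cfcₙ_le fun t _ => ?_
  rw [div_mul_eq_mul_div, ← sq, Real.norm_of_nonneg (by positivity)]
  exact div_le_one_of_le₀ (le_add_of_nonneg_right (sq_nonneg δ)) (by positivity)

lemma norm_mul_tikhonovInverse_mul_sub_le {p : A} (hp : IsSelfAdjoint p) {δ : ℝ} (hδ : δ ≠ 0) :
    ‖p * (tikhonovInverse p δ * p) - p‖ ≤ |δ| := by
  have hf := (continuous_div_sq_add_sq hδ).mul continuous_id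
  have hcfc : p * (tikhonovInverse p δ * p) - p =
      cfcₙ (fun t : ℝ => t * (t / (t ^ 2 + δ ^ 2) * t) - t) p := by
    rw [cfcₙ_sub (fun t : ℝ => t * (t / (t ^ 2 + δ ^ 2) * t)) (fun t => t) p
        (continuous_id.mul hf).continuousOn,
      cfcₙ_mul (fun t : ℝ => t) (fun t => t / (t ^ 2 + δ ^ 2) * t) p
        (hg := hf.continuousOn), cfcₙ_id' ℝ p, tikhonovInverse_mul_self hp hδ]
  rw [hcfc]
  refine norm_cfcₙ_le fun t _ => ?_
  have hres : t * (t / (t ^ 2 + δ ^ 2) * t) - t = -(t * δ ^ 2) / (t ^ 2 + δ ^ 2) := by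
    field_simp
    ring
  have hD : 0 < t ^ 2 + δ ^ 2 := by positivity
  have hamgm : |t| * |δ| ≤ t ^ 2 + δ ^ 2 := by
    nlinarith [two_mul_le_add_sq |t| |δ|, sq_abs t, sq_abs δ, abs_nonneg t, abs_nonneg δ]
  rw [hres, norm_div, norm_neg, norm_mul, Real.norm_of_nonneg (sq_nonneg δ),
    Real.norm_of_nonneg hD.le, div_le_iff₀ hD]
  calc ‖t‖ * δ ^ 2 = |δ| * (|t| * |δ|) := by rw [Real.norm_eq_abs, ← sq_abs δ]; ring
    _ ≤ |δ| * (t ^ 2 + δ ^ 2) := by gcongr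

lemma tendsto_mul_tikhonovInverse_mul_self {p : A} (hp : IsSelfAdjoint p) :
    Tendsto (fun δ => p * (tikhonovInverse p δ * p)) (𝓝[≠] 0) (𝓝 p) := by
  rw [tendsto_iff_norm_sub_tendsto_zero]
  refine squeeze_zero' (.of_forall fun _ => norm_nonneg _) ?_
    (tendsto_nhdsWithin_of_tendsto_nhds (continuous_abs.tendsto' 0 0 abs_zero))
  filter_upwards [self_mem_nhdsWithin] with δ hδ
  exact norm_mul_tikhonovInverse_mul_sub_le hp hδ

variable [PartialOrder A] [StarOrderedRing A]

lemma tikhonovInverse_conjugate_le {p : A} (hp : 0 ≤ p) {δ : ℝ} (hδ : δ ≠ 0) :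
    tikhonovInverse p δ * p * tikhonovInverse p δ ≤ tikhonovInverse p δ := by
  have hf := continuous_div_sq_add_sq hδ
  rw [tikhonovInverse_mul_self (.of_nonneg hp) hδ, tikhonovInverse,
    ← cfcₙ_mul (fun t : ℝ => t / (t ^ 2 + δ ^ 2) * t) (fun t => t / (t ^ 2 + δ ^ 2)) p
      (hf.mul continuous_id).continuousOn (hg := hf.continuousOn)]
  refine cfcₙ_mono (fun t ht => ?_) ((hf.mul continuous_id).mul hf).continuousOn hf.continuousOn
  have ht0 : 0 ≤ t := quasispectrum_nonneg_of_nonneg p hp t ht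
  refine mul_le_of_le_one_left (by positivity) ?_
  rw [div_mul_eq_mul_div, ← sq]
  exact div_le_one_of_le₀ (le_add_of_nonneg_right (sq_nonneg δ)) (by positivity)

end TikhonovInverse

section HermitianBlock

variable {A : Type*} [NonUnitalCStarAlgebra A]

/-- The `2 × 2` matrix `[p, z; z⋆, q]`, hermitian when `p` and `q` are self-adjoint. -/
def hermitianBlock (p z q : A) : CStarMatrix (Fin 2) (Fin 2) A :=
  CStarMatrix.ofMatrix !![p, z; star z, q]

variable [PartialOrder A] [StarOrderedRing A] {p z q : A}

lemma hermitianBlock_nonneg_iff :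
    0 ≤ hermitianBlock p z q ↔ ∃ a b c d : A, p = star a * a + star c * c ∧
      z = star a * b + star c * d ∧ q = star b * b + star d * d := by
  rw [nonneg_iff_exists_eq_star_mul_self]
  constructor
  · rintro ⟨N, hN⟩
    have hentry (i j : Fin 2) := congrFun (congrFun hN i) j
    simp only [CStarMatrix.mul_apply, Fin.sum_univ_two, CStarMatrix.star_apply] at hentry
    exact ⟨N 0 0, N 0 1, N 1 0, N 1 1, hentry 0 0, hentry 0 1, hentry 1 1⟩
  · rintro ⟨a, b, c, d, rfl, rfl, rfl⟩
    refine ⟨CStarMatrix.ofMatrix !![a, b; c, d], ?_⟩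
    ext i j
    fin_cases i <;> fin_cases j <;>
      simp [hermitianBlock, CStarMatrix.mul_apply, CStarMatrix.star_apply]

lemma hermitianBlock_mul_nonneg {a : A} (ha : 0 ≤ a) (y : A) :
    0 ≤ hermitianBlock a (a * y) (star y * a * y) := by
  obtain ⟨v, rfl⟩ := nonneg_iff_exists_eq_star_mul_self.mp ha
  exact hermitianBlock_nonneg_iff.mpr ⟨v, v * y, 0, 0, by simp, by simp [mul_assoc],
    by simp [mul_assoc]⟩

lemma nonneg_of_hermitianBlock_nonneg (h : 0 ≤ hermitianBlock p z q) : 0 ≤ p := by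
  obtain ⟨a, b, c, d, rfl, -, -⟩ := hermitianBlock_nonneg_iff.mp h
  exact add_nonneg (star_mul_self_nonneg _) (star_mul_self_nonneg _)

lemma le_of_hermitianBlock_nonneg (h : 0 ≤ hermitianBlock p z q) (u : A) :
    star u * z + star z * u - star u * p * u ≤ q := by
  obtain ⟨a, b, c, d, rfl, rfl, rfl⟩ := hermitianBlock_nonneg_iff.mp h
  rw [← sub_nonneg]
  convert add_nonneg (star_mul_self_nonneg (b - a * u)) (star_mul_self_nonneg (d - c * u)) using 1
  simp only [star_sub, star_mul, star_add, star_star, mul_add, add_mul, mul_sub, sub_mul, mul_assoc]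
  abel

lemma tikhonovInverse_mul_conjugate_le (h : 0 ≤ hermitianBlock p z q) {δ : ℝ} (hδ : δ ≠ 0) :
    star (tikhonovInverse p δ * z) * p * (tikhonovInverse p δ * z) ≤ q := by
  have hp := nonneg_of_hermitianBlock_nonneg h
  have hschur := le_of_hermitianBlock_nonneg h (tikhonovInverse p δ * z)
  have hg := (isSelfAdjoint_tikhonovInverse p δ).star_eq
  have hgap := sub_nonneg.mpr <|
    star_left_conjugate_le_conjugate (tikhonovInverse_conjugate_le hp hδ) z
  refine le_trans (sub_nonneg.mp ?_) hschur
  convert add_nonneg hgap hgap using 1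
  simp only [star_mul, hg, mul_assoc]
  abel

lemma tendsto_mul_tikhonovInverse_mul (h : 0 ≤ hermitianBlock p z q) :
    Tendsto (fun δ => p * (tikhonovInverse p δ * z)) (𝓝[≠] 0) (𝓝 z) := by
  have hp : IsSelfAdjoint p := .of_nonneg (nonneg_of_hermitianBlock_nonneg h)
  have hbound : ∀ᶠ δ in 𝓝[≠] 0, ‖tikhonovInverse p δ * p‖ ≤ 1 := by
    filter_upwards [self_mem_nhdsWithin] with δ hδ
    exact norm_tikhonovInverse_mul_self_le_one hp hδ
  have hfactor {x : A} (hx : star x * x ≤ p) :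
      Tendsto (fun δ => p * tikhonovInverse p δ * star x) (𝓝[≠] 0) (𝓝 (star x)) := by
    refine (tendsto_mul_of_star_mul_self_le hx hbound
      (tendsto_mul_tikhonovInverse_mul_self hp)).star.congr fun δ => ?_
    rw [star_mul, star_mul, hp.star_eq, (isSelfAdjoint_tikhonovInverse p δ).star_eq]
  obtain ⟨a, b, c, d, hpac, rfl, -⟩ := hermitianBlock_nonneg_iff.mp h
  have ha : star a * a ≤ p := hpac ▸ le_add_of_nonneg_right (star_mul_self_nonneg c)
  have hc : star c * c ≤ p := hpac ▸ le_add_of_nonneg_left (star_mul_self_nonneg a)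
  simpa only [mul_add, mul_assoc] using ((hfactor ha).mul_const b).add ((hfactor hc).mul_const d)

end HermitianBlock

section NPositive

variable {A B : Type*} [NonUnitalCStarAlgebra A] [PartialOrder A] [StarOrderedRing A]
  [NonUnitalCStarAlgebra B] [PartialOrder B] [StarOrderedRing B]

/-- A map `φ` is `n`-positive if applying it entrywise preserves positivity of `n × n` matrices.
Linearity of `φ` is not part of the definition. -/
def IsNPositive (n : ℕ) (φ : B → A) : Prop :=
  ∀ M : CStarMatrix (Fin n) (Fin n) B, 0 ≤ M → 0 ≤ M.map φ

lemma isNPositive_iff {n : ℕ} {φ : B → A} :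
    IsNPositive n φ ↔ ∀ M : Matrix (Fin n) (Fin n) B,
      (∃ N : Matrix (Fin n) (Fin n) B, M = star N * N) →
      ∃ N' : Matrix (Fin n) (Fin n) A, M.map φ = star N' * N' :=
  forall_congr' fun _ =>
    imp_congr nonneg_iff_exists_eq_star_mul_self nonneg_iff_exists_eq_star_mul_self

lemma IsNPositive.map_hermitianBlock_nonneg {φ : B → A} (hφ : IsNPositive 2 φ) {p z q : B}
    (h : 0 ≤ hermitianBlock p z q) : 0 ≤ hermitianBlock (φ p) (φ z) (φ q) := by
  have hmap := hφ _ h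
  have hstar : φ (star z) = star (φ z) :=
    (CStarMatrix.star_apply_of_isSelfAdjoint (.of_nonneg hmap) (i := 0) (j := 1)) ▸ rfl
  convert hmap using 1
  ext i j
  fin_cases i <;> fin_cases j <;> simp [hermitianBlock, hstar]

lemma IsNPositive.map_nonneg {φ : B → A} (hφ : IsNPositive 2 φ) {a : B} (ha : 0 ≤ a) :
    0 ≤ φ a :=
  nonneg_of_hermitianBlock_nonneg <| hφ.map_hermitianBlock_nonneg (hermitianBlock_mul_nonneg ha 0)

lemma IsNPositive.continuous {φ : B →ₗ[ℂ] A} (hφ : IsNPositive 2 φ) : Continuous φ :=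
  map_continuous (PositiveLinearMap.mk₀ φ fun _ => hφ.map_nonneg)

variable {φ : B ≃ₗ[ℂ] A}

lemma tendsto_conjugate_tikhonovInverse (hφ : IsNPositive 2 φ) (hφ' : IsNPositive 2 φ.symm)
    {a : B} (ha : 0 ≤ a) (y : B) :
    Tendsto (fun δ => star (tikhonovInverse (φ a) δ * φ (a * y)) * φ a *
      (tikhonovInverse (φ a) δ * φ (a * y))) (𝓝[≠] 0) (𝓝 (φ (star y * a * y))) := by
  set u : ℝ → A := fun δ => tikhonovInverse (φ a) δ * φ (a * y)
  have hcont : Continuous φ := IsNPositive.continuous (φ := φ.toLinearMap) hφ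
  have hcont' : Continuous φ.symm := IsNPositive.continuous (φ := φ.symm.toLinearMap) hφ'
  have hblock := hφ.map_hermitianBlock_nonneg (hermitianBlock_mul_nonneg ha y)
  have hupper : ∀ᶠ δ in 𝓝[≠] 0, φ.symm (star (u δ) * φ a * u δ) ≤ star y * a * y := by
    filter_upwards [self_mem_nhdsWithin] with δ hδ
    have hgap := sub_nonneg.mpr (tikhonovInverse_mul_conjugate_le hblock hδ)
    simpa only [map_sub, LinearEquiv.symm_apply_apply, sub_nonneg] using
      hφ'.map_nonneg hgap
  have hlower (δ : ℝ) : star y * φ.symm (φ a * u δ) + star (φ.symm (φ a * u δ)) * y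
      - star y * a * y ≤ φ.symm (star (u δ) * φ a * u δ) := by
    have hblock' := hφ'.map_hermitianBlock_nonneg
      (hermitianBlock_mul_nonneg (nonneg_of_hermitianBlock_nonneg hblock) (u δ))
    rw [LinearEquiv.symm_apply_apply] at hblock'
    exact le_of_hermitianBlock_nonneg hblock' y
  have hoff : Tendsto (fun δ => φ.symm (φ a * u δ)) (𝓝[≠] 0) (𝓝 (a * y)) := by
    simpa only [Function.comp_def, LinearEquiv.symm_apply_apply] using
      (hcont'.tendsto _).comp (tendsto_mul_tikhonovInverse_mul hblock)
  have hlim : Tendsto (fun δ => star y * φ.symm (φ a * u δ) + star (φ.symm (φ a * u δ)) * y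
      - star y * a * y) (𝓝[≠] 0) (𝓝 (star y * a * y)) := by
    have hsum := ((hoff.const_mul (star y)).add (hoff.star.mul_const y)).sub_const (star y * a * y)
    simpa only [star_mul, (IsSelfAdjoint.of_nonneg ha).star_eq, mul_assoc, add_sub_cancel_right]
      using hsum
  simpa only [Function.comp_def, LinearEquiv.apply_symm_apply] using (hcont.tendsto _).comp
    (tendsto_of_tendsto_of_le_of_le_const hlim (.of_forall hlower) hupper)

lemma tendsto_star_mul_mul_tikhonovInverse (hφ : IsNPositive 2 φ) (hφ' : IsNPositive 2 φ.symm)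
    {a : B} (ha : 0 ≤ a) (x y : B) :
    Tendsto (fun δ => star (tikhonovInverse (φ a) δ * φ (a * x)) * φ a *
      (tikhonovInverse (φ a) δ * φ (a * y))) (𝓝[≠] 0) (𝓝 (φ (star x * a * y))) :=
  tendsto_sesquilinear_of_tendsto_diag
    (S := fun δ => conjForm (φ a)
      (LinearMap.mulLeft ℂ (tikhonovInverse (φ a) δ) ∘ₗ φ.toLinearMap ∘ₗ LinearMap.mulLeft ℂ a))
    (T := (conjForm a LinearMap.id).compr₂ₛₗ φ.toLinearMap)
    (tendsto_conjugate_tikhonovInverse hφ hφ' ha) x y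

lemma map_star_mul_mul_nonneg (hφ : IsNPositive 2 φ) (hφ' : IsNPositive 2 φ.symm) {ι : Type*}
    [Fintype ι] {a : B} (ha : 0 ≤ a) (N : CStarMatrix ι ι B) :
    0 ≤ (star N * N.map (a * ·)).map φ := by
  obtain ⟨v, hv⟩ := nonneg_iff_exists_eq_star_mul_self.mp
    (hφ.map_nonneg ha)
  let R (δ : ℝ) : CStarMatrix ι ι A := N.map fun x => v * (tikhonovInverse (φ a) δ * φ (a * x))
  have hlim : Tendsto (fun δ => star (R δ) * R δ) (𝓝[≠] 0)
      (𝓝 ((star N * N.map (a * ·)).map φ)) := by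
    refine tendsto_pi_nhds.mpr fun i => tendsto_pi_nhds.mpr fun j => ?_
    simp only [CStarMatrix.map_apply, CStarMatrix.mul_apply, CStarMatrix.star_apply, map_sum,
      ← mul_assoc (star (N _ i))]
    refine tendsto_finsetSum _ fun k _ =>
      (tendsto_star_mul_mul_tikhonovInverse hφ hφ' ha (N k i) (N k j)).congr fun δ => ?_
    simp only [R, CStarMatrix.map_apply, hv, star_mul, mul_assoc]
  exact CStarAlgebra.isClosed_nonneg.mem_of_tendsto hlim
    (.of_forall fun δ => star_mul_self_nonneg (R δ))

theorem IsNPositive.of_two (hφ : IsNPositive 2 φ) (hφ' : IsNPositive 2 φ.symm)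
    (n : ℕ) : IsNPositive n φ := by
  intro M hM
  obtain ⟨N, rfl⟩ := nonneg_iff_exists_eq_star_mul_self.mp hM
  have hunit := CStarAlgebra.increasingApproximateUnit B
  have hcont : Continuous φ := IsNPositive.continuous (φ := φ.toLinearMap) hφ
  have hlim : Tendsto (fun a => (star N * N.map (a * ·)).map φ) (CStarAlgebra.approximateUnit B)
      (𝓝 ((star N * N).map φ)) := by
    refine tendsto_pi_nhds.mpr fun i => tendsto_pi_nhds.mpr fun j => ?_
    simp only [CStarMatrix.map_apply, CStarMatrix.mul_apply]
    exact (hcont.tendsto _).comp <| tendsto_finsetSum _ fun k _ =>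
      (hunit.tendsto_mul_right (N k j)).const_mul _
  exact CStarAlgebra.isClosed_nonneg.mem_of_tendsto hlim
    (hunit.eventually_nonneg.mono fun a ha => map_star_mul_mul_nonneg hφ hφ' ha N)

end NPositive

theorem stmt5 {A B : Type*} [NonUnitalCStarAlgebra A] [NonUnitalCStarAlgebra B]
    (φ : B ≃ₗ[ℂ] A)
    -- `φ` is 2-positive
    (h2 : ∀ M : Matrix (Fin 2) (Fin 2) B,
      (∃ N : Matrix (Fin 2) (Fin 2) B, M = star N * N) →
      ∃ N' : Matrix (Fin 2) (Fin 2) A, M.map ⇑φ = star N' * N')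
    -- `φ⁻¹` is 2-positive
    (h2' : ∀ M : Matrix (Fin 2) (Fin 2) A,
      (∃ N : Matrix (Fin 2) (Fin 2) A, M = star N * N) →
      ∃ N' : Matrix (Fin 2) (Fin 2) B, M.map ⇑φ.symm = star N' * N') :
    -- `φ` is a complete order isomorphism
    ∀ n : ℕ, 1 ≤ n →
      (∀ M : Matrix (Fin n) (Fin n) B,
        (∃ N : Matrix (Fin n) (Fin n) B, M = star N * N) →
        ∃ N' : Matrix (Fin n) (Fin n) A, M.map ⇑φ = star N' * N') ∧
      (∀ M : Matrix (Fin n) (Fin n) A,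
        (∃ N : Matrix (Fin n) (Fin n) A, M = star N * N) →
        ∃ N' : Matrix (Fin n) (Fin n) B, M.map ⇑φ.symm = star N' * N') := by
  intro n _
  let _ : PartialOrder A := CStarAlgebra.spectralOrder A
  have : StarOrderedRing A := CStarAlgebra.spectralOrderedRing A
  let _ : PartialOrder B := CStarAlgebra.spectralOrder B
  have : StarOrderedRing B := CStarAlgebra.spectralOrderedRing B
  have hφ : IsNPositive 2 φ := isNPositive_iff.mpr h2
  have hφ' : IsNPositive 2 φ.symm := isNPositive_iff.mpr h2'
  exact ⟨isNPositive_iff.mp (hφ.of_two hφ' n),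
    isNPositive_iff.mp (IsNPositive.of_two (φ := φ.symm) hφ' hφ n)⟩
end

section
/- Let B be a σ-unital C*-algebra and A a C*-algebra. If there exists an order isomorphism φ : B → A (a linear bijection with φ(B₊) = A₊, where B₊ and A₊ are the cones of positive elements), then there exists a Jordan isomorphism ψ : B → A, that is, a linear bijection satisfying ψ(x*) = ψ(x)* and ψ((xy + yx)/2) = (ψ(x)ψ(y) + ψ(y)ψ(x))/2 for all x, y ∈ B. -/
/-!
Positivity of a block `[[P, -Y], [-Y, N]]` is preserved by every positive map, although positive
maps need not be completely positive: when `P = 1` the block `(1, c, c²)` is a limit of sums of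
blocks `(μ, λ μ, λ² μ)` with `μ ≥ 0` and `λ` real (Bernstein approximation), the case of invertible
`P` follows by conjugation, and the general case by approximation.

Let `F : B → A` be the order isomorphism, `G` its inverse and `e` strictly positive. Take the block
with `Y = F (e b e)`, `P = F e` and `N = F (e b e b e)`, and perturb `P` to first order by `(F e)²`;
since `N` plays the role of `Y P⁻¹ Y`, its first variation is `-Y²`. Applying `G` and comparing the
two first variations gives `G (F (e b e)²) = e b Q b e` with `Q = G ((F e)²)`. Hence
`b ↦ F (e b e)` is a Jordan homomorphism on `B` with the product `x Q y`, and so is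
`b ↦ √Q b √Q`. Both are order embeddings with dense range, and both norms are determined on
self-adjoint elements by the order and `Q`, so that matching the two maps extends to a Jordan
isomorphism from `B` onto `A`.
-/

open Filter Topology
open scoped CStarAlgebra ComplexStarModule

section Blocks

variable {A : Type*} [NonUnitalCStarAlgebra A] [PartialOrder A]

/-- For a self-adjoint `Y`, positivity of the Hermitian block matrix `[[P, -Y], [-Y, N]]`, written
as an inequality between quadratic expressions in one variable `y`, so that it makes sense in an
algebra without a unit and can be tested on elements of `A` only. -/
def IsPosBlock (P Y N : A) : Prop :=
  ∀ y : A, star y * Y + Y * y ≤ star y * P * y + N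

namespace IsPosBlock

theorem of_tendsto [StarOrderedRing A] {ι : Type*} {l : Filter ι} [l.NeBot] {P Y N : ι → A}
    {P' Y' N' : A}
    (h : ∀ᶠ i in l, IsPosBlock (P i) (Y i) (N i)) (hP : Tendsto P l (𝓝 P'))
    (hY : Tendsto Y l (𝓝 Y')) (hN : Tendsto N l (𝓝 N')) : IsPosBlock P' Y' N' := fun y =>
  le_of_tendsto_of_tendsto ((hY.const_mul _).add (hY.mul_const y))
    (((hP.const_mul _).mul_const y).add hN) (h.mono fun _ hi => hi y)

variable [StarOrderedRing A]

theorem mono {P P' Y N N' : A} (h : IsPosBlock P Y N) (hP : P ≤ P') (hN : N ≤ N') :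
    IsPosBlock P' Y N' := fun y =>
  (h y).trans (add_le_add (star_left_conjugate_le_conjugate hP y) hN)

theorem sum {ι : Type*} (s : Finset ι) {P Y N : ι → A}
    (h : ∀ i ∈ s, IsPosBlock (P i) (Y i) (N i)) :
    IsPosBlock (∑ i ∈ s, P i) (∑ i ∈ s, Y i) (∑ i ∈ s, N i) := fun y => by
  simpa only [Finset.mul_sum, Finset.sum_mul, Finset.sum_add_distrib] using
    Finset.sum_le_sum fun i hi => h i hi y

theorem of_smul {m : A} (hm : 0 ≤ m) (r : ℝ) : IsPosBlock m (r • m) (r ^ 2 • m) := fun y => by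
  obtain ⟨x, rfl⟩ := CStarAlgebra.nonneg_iff_eq_star_mul_self.1 hm
  have h := star_mul_self_nonneg (x * y - r • x)
  rw [← sub_nonneg]
  convert h using 1
  simp only [star_sub, star_mul, star_smul, star_trivial, sub_mul, mul_sub, smul_mul_assoc,
    mul_smul_comm, mul_assoc]
  module

theorem of_conj {e b : A} (he : 0 ≤ e) (hb : IsSelfAdjoint b) :
    IsPosBlock e (e * b * e) (e * b * e * b * e) := fun y => by
  have h := star_left_conjugate_nonneg he (y - b * e)
  rw [← sub_nonneg]
  convert h using 1
  simp only [star_sub, star_mul, hb.star_eq, he.isSelfAdjoint.star_eq, sub_mul, mul_sub, mul_assoc]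
  abel

/-- Heuristically `N = Y p⁻¹ Y`, and the new corner agrees with `Y (p + 2 s p² + 2 s² p³)⁻¹ Y` up to
second order in `s`. -/
theorem perturb {p Y N : A} (hp : 0 ≤ p) (hY : IsSelfAdjoint Y) (h : IsPosBlock p Y N) (s : ℝ) :
    IsPosBlock (p + (2 * s) • (p * p) + (2 * s ^ 2) • (p * p * p)) Y
      (N - (2 * s) • (Y * Y) + (2 * s ^ 2) • (Y * p * Y)) := fun y => by
  have h₁ := sub_nonneg.2 (h (y + s • (p * y) + s • Y))
  have h₂ := smul_nonneg (sq_nonneg s) (star_left_conjugate_nonneg hp (p * y - Y))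
  rw [← sub_nonneg]
  convert add_nonneg h₁ h₂ using 1
  simp only [star_sub, star_add, star_mul, star_smul, star_trivial, hp.isSelfAdjoint.star_eq,
    hY.star_eq, sub_mul, mul_sub, add_mul, mul_add, smul_mul_assoc, mul_smul_comm, smul_smul,
    smul_add, smul_sub, mul_assoc]
  module

end IsPosBlock

theorem perturbation_nonneg [StarOrderedRing A] {p : A} (hp : 0 ≤ p) (s : ℝ) :
    0 ≤ p + (2 * s) • (p * p) + (2 * s ^ 2) • (p * p * p) := by
  have h := sub_nonneg.2 (IsPosBlock.of_smul hp 1 ((-2 * s) • p))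
  convert smul_nonneg (by norm_num : (0 : ℝ) ≤ 1 / 2) (add_nonneg h hp) using 1
  simp only [star_smul, star_trivial, hp.isSelfAdjoint.star_eq, smul_mul_assoc, mul_smul_comm,
    smul_smul, mul_assoc]
  module

end Blocks

section Bernstein

open Polynomial

variable {D : Type*} [CStarAlgebra D]

theorem aeval_bernsteinPolynomial_nonneg [PartialOrder D] [StarOrderedRing D] {c : D}
    (h₀ : 0 ≤ c) (h₁ : c ≤ 1) (n i : ℕ) : 0 ≤ aeval c (bernsteinPolynomial ℝ n i) := by
  rw [← cfc_polynomial _ c h₀.isSelfAdjoint]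
  refine cfc_nonneg fun x hx => ?_
  have hx₀ : 0 ≤ x := spectrum_nonneg_of_nonneg h₀ hx
  have hx₁ : 0 ≤ 1 - x := sub_nonneg.2 ((CFC.le_one_iff (R := ℝ) c).1 h₁ x hx)
  simp only [bernsteinPolynomial, eval_mul, eval_pow, eval_X, eval_sub, eval_one, eval_natCast]
  positivity

theorem sum_aeval_bernsteinPolynomial (c : D) (n : ℕ) :
    ∑ i ∈ Finset.range (n + 1), aeval c (bernsteinPolynomial ℝ n i) = 1 := by
  rw [← map_sum, bernsteinPolynomial.sum, map_one]

theorem sum_smul_aeval_bernsteinPolynomial (c : D) (n : ℕ) :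
    ∑ i ∈ Finset.range (n + 1), (i : ℝ) • aeval c (bernsteinPolynomial ℝ n i) = (n : ℝ) • c := by
  simpa only [map_sum, map_nsmul, aeval_X, Nat.cast_smul_eq_nsmul] using
    congrArg (aeval c) (bernsteinPolynomial.sum_smul ℝ n)

theorem sum_sq_smul_aeval_bernsteinPolynomial (c : D) (n : ℕ) :
    ∑ i ∈ Finset.range (n + 1), (i : ℝ) ^ 2 • aeval c (bernsteinPolynomial ℝ n i) =
      (n : ℝ) ^ 2 • (c * c) + (n : ℝ) • (c - c * c) := by
  have factorial_moment :
      ∑ i ∈ Finset.range (n + 1), ((i : ℝ) * (i - 1)) • aeval c (bernsteinPolynomial ℝ n i) =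
        ((n : ℝ) * (n - 1)) • (c * c) := by
    have h := congrArg (aeval c) (bernsteinPolynomial.sum_mul_smul ℝ n)
    have cast_pred : ∀ k : ℕ, ((k * (k - 1) : ℕ) : ℝ) = k * (k - 1) := fun k => by
      cases k <;> simp
    simp only [map_sum, map_nsmul, map_pow, aeval_X] at h
    simpa only [← Nat.cast_smul_eq_nsmul ℝ, cast_pred, pow_two] using h
  calc ∑ i ∈ Finset.range (n + 1), (i : ℝ) ^ 2 • aeval c (bernsteinPolynomial ℝ n i)
      = ∑ i ∈ Finset.range (n + 1), (((i : ℝ) * (i - 1)) • aeval c (bernsteinPolynomial ℝ n i) +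
          (i : ℝ) • aeval c (bernsteinPolynomial ℝ n i)) :=
        Finset.sum_congr rfl fun i _ => by module
    _ = (n : ℝ) ^ 2 • (c * c) + (n : ℝ) • (c - c * c) := by
        rw [Finset.sum_add_distrib, factorial_moment, sum_smul_aeval_bernsteinPolynomial]
        module

end Bernstein

section Kadison

variable {D A : Type*} [CStarAlgebra D] [PartialOrder D] [StarOrderedRing D]
  [NonUnitalCStarAlgebra A] [PartialOrder A] [StarOrderedRing A]

theorem IsPosBlock.bernstein (Ψ : D →ₚ[ℂ] A) {x : D} (h₀ : 0 ≤ x) (h₁ : x ≤ 1) (r s : ℝ)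
    {n : ℕ} (hn : n ≠ 0) :
    IsPosBlock (Ψ 1) (Ψ (r • 1 + s • x))
      (Ψ ((r • 1 + s • x) * (r • 1 + s • x)) + (n : ℝ)⁻¹ • s ^ 2 • Ψ (x - x * x)) := by
  have hn' : (n : ℝ) ≠ 0 := mod_cast hn
  let q : ℕ → D := fun i => Polynomial.aeval x (bernsteinPolynomial ℝ n i)
  let node : ℕ → ℝ := fun i => r + s * (i / n)
  have hq : ∀ i, 0 ≤ Ψ (q i) := fun i => map_nonneg Ψ (aeval_bernsteinPolynomial_nonneg h₀ h₁ n i)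
  have hq₀ : ∑ i ∈ Finset.range (n + 1), q i = 1 := sum_aeval_bernsteinPolynomial x n
  have hq₁ : ∑ i ∈ Finset.range (n + 1), (i : ℝ) • q i = (n : ℝ) • x :=
    sum_smul_aeval_bernsteinPolynomial x n
  have hq₂ : ∑ i ∈ Finset.range (n + 1), (i : ℝ) ^ 2 • q i =
      (n : ℝ) ^ 2 • (x * x) + (n : ℝ) • (x - x * x) := sum_sq_smul_aeval_bernsteinPolynomial x n
  have first : ∑ i ∈ Finset.range (n + 1), node i • q i = r • 1 + s • x := by
    have expand : ∀ i : ℕ, node i • q i = r • q i + (s / n) • ((i : ℝ) • q i) := fun i => by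
      simp only [node]; module
    simp only [expand, Finset.sum_add_distrib, ← Finset.smul_sum, hq₀, hq₁]
    rw [smul_smul, div_mul_cancel₀ _ hn']
  have second : ∑ i ∈ Finset.range (n + 1), node i ^ 2 • q i =
      (r • 1 + s • x) * (r • 1 + s • x) + (n : ℝ)⁻¹ • s ^ 2 • (x - x * x) := by
    have expand : ∀ i : ℕ, node i ^ 2 • q i =
        r ^ 2 • q i + (2 * r * s / n) • ((i : ℝ) • q i) + (s / n) ^ 2 • ((i : ℝ) ^ 2 • q i) :=
      fun i => by simp only [node]; module
    simp only [expand, Finset.sum_add_distrib, ← Finset.smul_sum, hq₀, hq₁, hq₂, add_mul, mul_add,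
      smul_mul_assoc, mul_smul_comm, one_mul, mul_one]
    match_scalars <;> field_simp
    ring
  have block := IsPosBlock.sum (Finset.range (n + 1)) fun i _ => IsPosBlock.of_smul (hq i) (node i)
  simp only [← Ψ.map_smul_of_tower, ← map_sum, hq₀, first, second] at block
  simpa only [← Ψ.map_smul_of_tower, ← map_add]

theorem exists_eq_affine_mem_Icc {c : D} (hc : IsSelfAdjoint c) :
    ∃ (r s : ℝ), ∃ x ∈ Set.Icc (0 : D) 1, c = r • 1 + s • x := by
  set L : ℝ := ‖c‖ + 1 with hL
  have hL₀ : 0 < L := by positivity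
  have norm_le : ‖c‖ • (1 : D) ≤ L • 1 := smul_le_smul_of_nonneg_right (by simp [hL]) zero_le_one
  have upper : 0 ≤ L • 1 - c := sub_nonneg.2 <| le_trans
    (by simpa only [Algebra.algebraMap_eq_smul_one] using hc.le_algebraMap_norm_self) norm_le
  have lower : 0 ≤ c + L • 1 := neg_le_iff_add_nonneg.1 <| le_trans (neg_le_neg norm_le)
    (by simpa only [Algebra.algebraMap_eq_smul_one] using hc.neg_algebraMap_norm_le_self)
  refine ⟨-L, 2 * L, (2 * L)⁻¹ • (c + L • 1), ⟨smul_nonneg (by positivity) lower, ?_⟩, ?_⟩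
  · rw [← sub_nonneg]
    convert smul_nonneg (show 0 ≤ (2 * L)⁻¹ by positivity) upper using 1
    match_scalars <;> field_simp
    ring
  · match_scalars <;> field_simp
    ring

/-- Kadison's inequality: for `Ψ 1 = 1` it says that `Ψ c * Ψ c ≤ Ψ (c * c)`. -/
theorem IsPosBlock.of_map_mul_self (Ψ : D →ₚ[ℂ] A) {c : D} (hc : IsSelfAdjoint c) :
    IsPosBlock (Ψ 1) (Ψ c) (Ψ (c * c)) := by
  obtain ⟨r, s, x, ⟨h₀, h₁⟩, rfl⟩ := exists_eq_affine_mem_Icc hc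
  refine IsPosBlock.of_tendsto ((eventually_ne_atTop 0).mono fun n hn =>
    IsPosBlock.bernstein Ψ h₀ h₁ r s hn) tendsto_const_nhds tendsto_const_nhds ?_
  simpa only [zero_smul, add_zero] using tendsto_const_nhds.add
    ((tendsto_inv_atTop_nhds_zero_nat (𝕜 := ℝ)).smul_const (s ^ 2 • Ψ (x - x * x)))

end Kadison

section Map

variable {A : Type*} [NonUnitalCStarAlgebra A] [PartialOrder A] [StarOrderedRing A]

/-- The positive map `x ↦ star a * x * a`, used to normalise the corner of a block and
to cut down by an approximate unit. -/
noncomputable def conjugation (a : A) : A →ₚ[ℂ] A :=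
  .mk₀ (LinearMap.mulLeftRight ℂ (star a, a)) fun x hx => by
    simpa only [LinearMap.mulLeftRight_apply] using star_left_conjugate_nonneg hx a

theorem conjugation_apply (a x : A) : conjugation a x = star a * x * a :=
  LinearMap.mulLeftRight_apply (star a) a x

section Unital

variable {D : Type*} [CStarAlgebra D] [PartialOrder D] [StarOrderedRing D]

theorem IsPosBlock.map_of_unit (Ψ : D →ₚ[ℂ] A) {u : Dˣ} (hu : IsSelfAdjoint (u : D)) {Y N : D}
    (hY : IsSelfAdjoint Y) (h : IsPosBlock (u * u : D) Y N) :
    IsPosBlock (Ψ (u * u)) (Ψ Y) (Ψ N) := by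
  obtain ⟨v, hv, huv, hvu⟩ : ∃ v : D, star v = v ∧ u * v = 1 ∧ v * u = 1 := by
    refine ⟨↑u⁻¹, ?_, u.mul_inv, u.inv_mul⟩
    rw [← Units.coe_star_inv, Units.ext (show ↑(star u) = (u : D) from hu)]
  have cancel_left : ∀ x : D, u * (v * x) = x := fun x => by rw [← mul_assoc, huv, one_mul]
  have schur_le : Y * v * (v * Y) ≤ N := by
    have test := h (v * (v * Y))
    simp only [star_mul, hv, hY.star_eq, mul_assoc, cancel_left] at test
    simpa only [mul_assoc, add_le_add_iff_left] using test
  have h₁ : conjugation (u : D) 1 = u * u := by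
    rw [conjugation_apply, hu.star_eq, mul_one]
  have hc : conjugation (u : D) (v * Y * v) = Y := by
    simp only [conjugation_apply, hu.star_eq, mul_assoc, cancel_left, hvu, mul_one]
  have hcc : conjugation (u : D) (v * Y * v * (v * Y * v)) = Y * v * (v * Y) := by
    simp only [conjugation_apply, hu.star_eq, mul_assoc, cancel_left, hvu, mul_one]
  have kadison : IsPosBlock (Ψ (u * u)) (Ψ Y) (Ψ (Y * v * (v * Y))) := by
    convert IsPosBlock.of_map_mul_self (Ψ.comp (conjugation (u : D)))
      (by simpa only [hv] using hY.conjugate v) using 1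
    exacts [congrArg Ψ h₁.symm, congrArg Ψ hc.symm, congrArg Ψ hcc.symm]
  exact kadison.mono le_rfl (by gcongr)

theorem IsPosBlock.map_of_unital (Ψ : D →ₚ[ℂ] A) {P Y N : D} (hP : 0 ≤ P)
    (hY : IsSelfAdjoint Y) (h : IsPosBlock P Y N) : IsPosBlock (Ψ P) (Ψ Y) (Ψ N) := by
  have shifted : ∀ ε > (0 : ℝ), IsPosBlock (Ψ P + ε • Ψ 1) (Ψ Y) (Ψ N) := fun ε hε => by
    have hε₁ : 0 ≤ ε • (1 : D) := smul_nonneg hε.le zero_le_one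
    have unit : IsUnit (P + ε • (1 : D)) :=
      CStarAlgebra.isUnit_of_le _ (le_add_of_nonneg_left hP)
        (IsStrictlyPositive.smul hε isStrictlyPositive_one)
    obtain ⟨u, hu⟩ := (CFC.isUnit_sqrt_iff _ (add_nonneg hP hε₁)).2 unit
    have hu_sq : (u * u : D) = P + ε • 1 := by
      rw [hu, CFC.sqrt_mul_sqrt_self _ (add_nonneg hP hε₁)]
    have hu_sa : IsSelfAdjoint (u : D) := hu ▸ (CFC.sqrt_nonneg _).isSelfAdjoint
    have block : IsPosBlock (u * u : D) Y N :=
      hu_sq ▸ h.mono (le_add_of_nonneg_right hε₁) le_rfl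
    simpa only [hu_sq, map_add, Ψ.map_smul_of_tower] using block.map_of_unit Ψ hu_sa hY
  refine IsPosBlock.of_tendsto (l := 𝓝[>] (0 : ℝ)) (eventually_mem_nhdsWithin.mono shifted)
    ?_ tendsto_const_nhds tendsto_const_nhds
  have cont : Continuous fun ε : ℝ => Ψ P + ε • Ψ 1 := by fun_prop
  simpa using (cont.tendsto 0).mono_left nhdsWithin_le_nhds

end Unital

section ApproximateUnit

variable {B : Type*} [NonUnitalCStarAlgebra B] [PartialOrder B] [StarOrderedRing B]
  {l : Filter B}

theorem tendsto_star_mul_approximateUnit (hl : l.IsIncreasingApproximateUnit) (x : B) :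
    Tendsto (fun u => star u * x) l (𝓝 x) :=
  (hl.tendsto_mul_right x).congr' (hl.eventually_star_eq.mono fun u hu => by simp only [hu])

theorem tendsto_conjugation_approximateUnit (hl : l.IsIncreasingApproximateUnit) (x : B) :
    Tendsto (fun u => conjugation u x) l (𝓝 x) := by
  have bounded : IsBoundedUnder (· ≤ ·) l ((‖·‖) ∘ fun u : B => star u) :=
    isBoundedUnder_of_eventually_le (hl.eventually_norm.mono fun u hu => (norm_star u).trans_le hu)
  have small : Tendsto (fun u => x * u - x) l (𝓝 0) := by
    simpa only [sub_self] using (hl.tendsto_mul_left x).sub_const x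
  have lim := (isBoundedUnder_le_mul_tendsto_zero bounded small).add
    (tendsto_star_mul_approximateUnit hl x)
  rw [zero_add] at lim
  refine lim.congr fun u => ?_
  rw [conjugation_apply, mul_sub, sub_add_cancel, mul_assoc]

end ApproximateUnit

section Unitization

variable {B : Type*} [NonUnitalCStarAlgebra B]

theorem inr_snd_inr_mul (u : B) (y : B⁺¹) : (((u : B⁺¹) * y).snd : B⁺¹) = (u : B⁺¹) * y := by
  ext <;> simp

variable [PartialOrder B] [StarOrderedRing B]

/-- The positive map `x ↦ star u * x * u` from the unitization back to the algebra; as `u`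
runs through an approximate unit, it reduces statements on positive maps to a unital domain. -/
noncomputable def compression (u : B) : B⁺¹ →ₚ[ℂ] B :=
  .mk₀ (Unitization.sndHom ℂ ℂ B ∘ₗ (conjugation (u : B⁺¹)).toLinearMap) fun x hx => by
    have h := map_nonneg (conjugation (u : B⁺¹)) hx
    rwa [conjugation_apply, ← Unitization.inr_star, mul_assoc, ← inr_snd_inr_mul,
      Unitization.inr_nonneg_iff, ← mul_assoc, Unitization.inr_star, ← conjugation_apply] at h

theorem compression_inr (u x : B) : compression u (x : B⁺¹) = conjugation u x := by
  change (conjugation (u : B⁺¹) (x : B⁺¹)).snd = _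
  simp only [conjugation_apply, ← Unitization.inr_mul, ← Unitization.inr_star, Unitization.snd_inr]

theorem compression_one (u : B) : compression u 1 = star u * u := by
  change (conjugation (u : B⁺¹) 1).snd = _
  rw [conjugation_apply, mul_one, ← Unitization.inr_star, ← Unitization.inr_mul,
    Unitization.snd_inr]

theorem tendsto_map_compression_inr {l : Filter B} (hl : l.IsIncreasingApproximateUnit)
    (φ : B →ₚ[ℂ] A) (x : B) : Tendsto (fun u => φ (compression u (x : B⁺¹))) l (𝓝 (φ x)) := by
  simp only [compression_inr]
  exact ((map_continuous φ).tendsto x).comp (tendsto_conjugation_approximateUnit hl x)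

theorem IsPosBlock.inr {P Y N : B} (h : IsPosBlock P Y N) :
    IsPosBlock (P : B⁺¹) (Y : B⁺¹) (N : B⁺¹) := fun y => by
  have hl := CStarAlgebra.increasingApproximateUnit B
  have := hl.neBot
  have cont : Continuous ((↑) : B → B⁺¹) := Unitization.continuous_inr
  have approx : ∀ u : B, 0 ≤ star y * (conjugation u P : B) * y + N -
      (star y * (star u * Y : B) + (Y * u : B) * y) := fun u => by
    have test := Unitization.inr_nonneg_iff.2 (sub_nonneg.2 (h ((u : B⁺¹) * y).snd))
    simpa only [Unitization.inr_sub, Unitization.inr_add, Unitization.inr_mul,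
      Unitization.inr_star, inr_snd_inr_mul, star_mul, conjugation_apply, mul_assoc] using test
  have lim := (((cont.tendsto P).comp (tendsto_conjugation_approximateUnit hl P)).const_mul
    (star y)).mul_const y |>.add_const (N : B⁺¹) |>.sub <|
    (((cont.tendsto Y).comp (tendsto_star_mul_approximateUnit hl Y)).const_mul (star y)).add
      (((cont.tendsto Y).comp (hl.tendsto_mul_left Y)).mul_const y)
  exact sub_nonneg.1 (ge_of_tendsto' lim approx)

theorem IsPosBlock.map (φ : B →ₚ[ℂ] A) {P Y N : B} (hP : 0 ≤ P)
    (hY : IsSelfAdjoint Y) (h : IsPosBlock P Y N) : IsPosBlock (φ P) (φ Y) (φ N) := by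
  have hl := CStarAlgebra.increasingApproximateUnit B
  have := hl.neBot
  exact IsPosBlock.of_tendsto (.of_forall fun u => IsPosBlock.map_of_unital
    (φ.comp (compression u)) (Unitization.inr_nonneg_iff.2 hP) (hY.inr ℂ) h.inr)
    (tendsto_map_compression_inr hl φ P) (tendsto_map_compression_inr hl φ Y)
    (tendsto_map_compression_inr hl φ N)

end Unitization

end Map

section FirstVariation

variable {A B : Type*} [NonUnitalCStarAlgebra A] [PartialOrder A] [StarOrderedRing A]
  [NonUnitalCStarAlgebra B] [PartialOrder B] [StarOrderedRing B]

theorem eq_zero_of_forall_nonneg_smul_add {x c : A} (h : ∀ s : ℝ, 0 ≤ s • x + s ^ 2 • c) :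
    x = 0 := by
  have lim : Tendsto (fun s : ℝ => x + s • c) (𝓝 0) (𝓝 x) := by
    simpa only [zero_smul, add_zero] using
      (show Continuous fun s : ℝ => x + s • c by fun_prop).tendsto 0
  have factor : ∀ s : ℝ, s • x + s ^ 2 • c = s • (x + s • c) := fun s => by module
  simp only [factor] at h
  refine le_antisymm (le_of_tendsto (lim.mono_left (nhdsWithin_le_nhds (s := Set.Iio 0)))
    (eventually_mem_nhdsWithin.mono fun s (hs : s < 0) => ?_))
    (ge_of_tendsto (lim.mono_left (nhdsWithin_le_nhds (s := Set.Ioi 0)))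
      (eventually_mem_nhdsWithin.mono fun s (hs : 0 < s) => ?_))
  · simpa only [inv_smul_smul₀ hs.ne] using
      smul_nonpos_of_nonpos_of_nonneg (inv_nonpos.2 hs.le) (h s)
  · simpa only [inv_smul_smul₀ hs.ne'] using smul_nonneg (inv_nonneg.2 hs.le) (h s)

theorem map_mul_self_of_leftInverse (F : B →ₚ[ℂ] A) (G : A →ₚ[ℂ] B)
    (hGF : Function.LeftInverse G F) {e b : B} (he : 0 ≤ e) (hb : IsSelfAdjoint b) :
    G (F (e * b * e) * F (e * b * e)) = e * (b * G (F e * F e) * b) * e := by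
  set p := F e
  set Y := F (e * b * e)
  have hGp : G p = e := hGF e
  have hGY : G Y = e * b * e := hGF _
  have hGN : G (F (e * b * e * b * e)) = e * b * e * b * e := hGF _
  have hp₀ : 0 ≤ p := map_nonneg F he
  have hebe : IsSelfAdjoint (e * b * e) := hb.conjugate_self he.isSelfAdjoint
  have hY_sa : IsSelfAdjoint Y := hebe.map F
  have block : IsPosBlock p Y (F (e * b * e * b * e)) :=
    (IsPosBlock.of_conj he hb).map F he hebe
  have variation : ∀ s : ℝ,
      0 ≤ s • ((2 : ℝ) • (e * (b * G (p * p) * b) * e - G (Y * Y))) +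
        s ^ 2 • ((2 : ℝ) • (e * (b * G (p * p * p) * b) * e + G (Y * p * Y))) := fun s => by
    have test := ((block.perturb hp₀ hY_sa s).map G (perturbation_nonneg hp₀ s) hY_sa) (b * e)
    simp only [map_add, map_sub, G.map_smul_of_tower, hGp, hGY, hGN] at test
    convert sub_nonneg.2 test using 1
    simp only [star_mul, hb.star_eq, he.isSelfAdjoint.star_eq, add_mul, mul_add,
      smul_mul_assoc, mul_smul_comm, mul_assoc]
    module
  have h := eq_zero_of_forall_nonneg_smul_add variation
  exact (sub_eq_zero.1 ((smul_eq_zero_iff_right two_ne_zero).1 h)).symm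

end FirstVariation

section SquareInequality

variable {A B : Type*} [NonUnitalCStarAlgebra A] [PartialOrder A] [StarOrderedRing A]
  [NonUnitalCStarAlgebra B] [PartialOrder B] [StarOrderedRing B]

theorem IsPosBlock.mul_self_le {P Y N : A} (h : IsPosBlock P Y N) (hP : IsSelfAdjoint P)
    (hY : IsSelfAdjoint Y) {K : ℝ} (hK : 0 < K) (hPK : ‖P‖ ≤ K) : Y * Y ≤ K • N := by
  have conj_le : Y * P * Y ≤ K • (Y * Y) := by
    have h₁ := CStarAlgebra.star_left_conjugate_le_norm_smul (a := Y) (b := P) hP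
    rw [hY.star_eq] at h₁
    exact h₁.trans (smul_le_smul_of_nonneg_right hPK hY.mul_self_nonneg)
  have test : K⁻¹ • (Y * Y) + K⁻¹ • (Y * Y) ≤ K⁻¹ ^ 2 • (Y * P * Y) + N := by
    simpa only [star_smul, star_trivial, hY.star_eq, smul_mul_assoc, mul_smul_comm, smul_smul,
      pow_two] using h (K⁻¹ • Y)
  have bound : K⁻¹ ^ 2 • (Y * P * Y) ≤ K⁻¹ • (Y * Y) := by
    simpa only [smul_smul, pow_two, inv_mul_cancel_right₀ hK.ne'] using
      smul_le_smul_of_nonneg_left conj_le (sq_nonneg K⁻¹)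
  have scaled : K⁻¹ • (Y * Y) ≤ N :=
    le_of_add_le_add_left (test.trans (add_le_add_left bound N))
  simpa only [smul_inv_smul₀ hK.ne'] using smul_le_smul_of_nonneg_left scaled hK.le

theorem exists_map_mul_self_le (φ : B →ₚ[ℂ] A) :
    ∃ K > (0 : ℝ), ∀ x, IsSelfAdjoint x → φ x * φ x ≤ K • φ (x * x) := by
  obtain ⟨C, hC⟩ := φ.exists_norm_apply_le
  refine ⟨C + 1, by positivity, fun x hx => ?_⟩
  have hl := CStarAlgebra.increasingApproximateUnit B
  have := hl.neBot
  refine le_of_tendsto_of_tendsto ((tendsto_map_compression_inr hl φ x).mul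
    (tendsto_map_compression_inr hl φ x)) ((tendsto_map_compression_inr hl φ (x * x)).const_smul _)
    (hl.eventually_norm.mono fun u hu => ?_)
  have kadison : IsPosBlock (φ (compression u 1)) (φ (compression u (x : B⁺¹)))
      (φ (compression u ((x * x : B) : B⁺¹))) := by
    rw [Unitization.inr_mul]
    exact IsPosBlock.of_map_mul_self (φ.comp (compression u)) (hx.inr ℂ)
  refine kadison.mul_self_le (((IsSelfAdjoint.one _).map (compression u)).map φ)
    (((hx.inr ℂ).map (compression u)).map φ) (by positivity) ?_
  calc ‖φ (compression u 1)‖ ≤ C * ‖star u * u‖ := compression_one u ▸ hC _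
    _ ≤ C * 1 := by
      rw [CStarRing.norm_star_mul_self]
      gcongr
      exact mul_le_one₀ hu (norm_nonneg u) hu
    _ ≤ C + 1 := by linarith

end SquareInequality

section StrictlyPositive

variable {A : Type*} [NonUnitalCStarAlgebra A]

theorem exists_norm_sub_conj_le {k : A} (hk : IsSelfAdjoint k) {δ : ℝ} (hδ : 0 < δ) :
    ∃ h, ‖k - k * h * k‖ ≤ δ := by
  have pos : ∀ x : ℝ, 0 < x ^ 2 + δ ^ 2 := fun x => by positivity
  have cont : Continuous fun x : ℝ => x / (x ^ 2 + δ ^ 2) := by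
    fun_prop (disch := exact fun x => (pos x).ne')
  refine ⟨cfcₙ (fun x : ℝ => x / (x ^ 2 + δ ^ 2)) k, ?_⟩
  have eq : k - k * cfcₙ (fun x : ℝ => x / (x ^ 2 + δ ^ 2)) k * k =
      cfcₙ (fun x : ℝ => x - x * (x / (x ^ 2 + δ ^ 2)) * x) k := by
    have := cont.continuousOn (s := quasispectrum ℝ k)
    rw [cfcₙ_sub .., cfcₙ_mul .., cfcₙ_mul .., cfcₙ_id' ℝ k]
  rw [eq]
  refine norm_cfcₙ_le fun x _ => ?_
  have h : x - x * (x / (x ^ 2 + δ ^ 2)) * x = x * δ ^ 2 / (x ^ 2 + δ ^ 2) := by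
    field_simp [(pos x).ne']
    ring
  rw [h, Real.norm_eq_abs, abs_div, abs_of_pos (pos x), div_le_iff₀ (pos x), abs_mul,
    abs_of_pos (pow_pos hδ 2)]
  nlinarith [sq_nonneg (|x| - δ), sq_abs x, abs_nonneg x]

variable [PartialOrder A] [StarOrderedRing A]

theorem norm_sub_mul_sq_le_s7 {e k : A} (he : IsSelfAdjoint e) (hk : IsSelfAdjoint k) {K : ℝ}
    (hK : 0 ≤ K) (h : e * e ≤ K • (k * k)) (m : A) :
    ‖e - m * e‖ ^ 2 ≤ K * ‖k - m * k‖ ^ 2 := by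
  have conj_nonneg : ∀ x : A, 0 ≤ x → 0 ≤ x - m * x - (x - m * x) * star m := fun x hx => by
    obtain ⟨w, rfl⟩ := CStarAlgebra.nonneg_iff_eq_star_mul_self.1 hx
    convert star_mul_self_nonneg (w - w * star m) using 1
    simp only [star_sub, star_mul, star_star, sub_mul, mul_sub, mul_assoc]
  have le : (e - m * e) * star (e - m * e) ≤ K • ((k - m * k) * star (k - m * k)) := by
    rw [← sub_nonneg]
    convert conj_nonneg _ (sub_nonneg.2 h) using 1
    simp only [star_sub, star_mul, he.star_eq, hk.star_eq, sub_mul, mul_sub, smul_mul_assoc,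
      mul_smul_comm, mul_assoc]
    module
  calc ‖e - m * e‖ ^ 2 = ‖(e - m * e) * star (e - m * e)‖ := by
        rw [CStarRing.norm_self_mul_star, pow_two]
    _ ≤ ‖K • ((k - m * k) * star (k - m * k))‖ :=
        CStarAlgebra.norm_le_norm_of_nonneg_of_le (mul_star_self_nonneg _) le
    _ = K * ‖k - m * k‖ ^ 2 := by
        rw [norm_smul, Real.norm_of_nonneg hK, CStarRing.norm_self_mul_star, pow_two]

theorem mem_closure_range_mul {e k : A} (he : IsSelfAdjoint e) (hk : IsSelfAdjoint k) {K : ℝ}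
    (hK : 0 < K) (h : e * e ≤ K • (k * k)) : e ∈ closure (Set.range (k * ·)) := by
  refine Metric.mem_closure_iff.2 fun ε hε => ?_
  obtain ⟨x, hx⟩ := exists_norm_sub_conj_le hk (show 0 < ε / (2 * √K) by positivity)
  refine ⟨k * (x * e), ⟨x * e, rfl⟩, ?_⟩
  have bound : ‖e - k * x * e‖ ^ 2 ≤ (ε / 2) ^ 2 :=
    calc ‖e - k * x * e‖ ^ 2 ≤ K * ‖k - k * x * k‖ ^ 2 := norm_sub_mul_sq_le_s7 he hk hK.le h _
      _ ≤ K * (ε / (2 * √K)) ^ 2 := by gcongr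
      _ = (ε / 2) ^ 2 := by
        rw [div_pow, mul_pow, Real.sq_sqrt hK.le]
        field_simp
  rw [dist_eq_norm, ← mul_assoc]
  linarith [le_of_sq_le_sq bound (by positivity)]

theorem denseRange_mul_of_mul_self_le {e k : A} (he : IsSelfAdjoint e) (hk : IsSelfAdjoint k)
    {K : ℝ} (hK : 0 < K) (h : e * e ≤ K • (k * k)) (hd : DenseRange (e * ·)) :
    DenseRange (k * ·) := fun x => by
  refine closure_minimal ?_ isClosed_closure (hd x)
  rintro _ ⟨b, rfl⟩
  refine map_mem_closure (f := (· * b)) (continuous_mul_const b)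
    (mem_closure_range_mul he hk hK h) ?_
  rintro _ ⟨c, rfl⟩
  exact ⟨c * b, (mul_assoc k c b).symm⟩

theorem denseRange_conjugation {k : A} (hk : IsSelfAdjoint k) (hd : DenseRange (k * ·)) :
    DenseRange (conjugation k) := fun x => by
  refine closure_minimal ?_ isClosed_closure (hd x)
  rintro _ ⟨b, rfl⟩
  have cont : Continuous fun y : A => k * star y := by fun_prop
  have h := map_mem_closure (t := Set.range (conjugation k)) cont (hd (star b)) <| by
    rintro _ ⟨c, rfl⟩
    exact ⟨star c, by simp only [conjugation_apply, star_mul, hk.star_eq, mul_assoc]⟩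
  simpa only [star_star] using h

theorem nonneg_of_forall_conjugation_nonneg {x : A} (h : ∀ y, 0 ≤ conjugation y x) : 0 ≤ x :=
  have hl := CStarAlgebra.increasingApproximateUnit A
  have := hl.neBot
  ge_of_tendsto' (tendsto_conjugation_approximateUnit hl x) h

theorem conjugation_nonneg_iff {k : A} (hd : DenseRange (k * ·)) {x : A} :
    0 ≤ conjugation k x ↔ 0 ≤ x := by
  refine ⟨fun h => nonneg_of_forall_conjugation_nonneg fun y => ?_, map_nonneg _⟩
  simp only [conjugation_apply] at h ⊢
  refine hd.induction_on (p := fun y => 0 ≤ star y * x * y) y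
    (CStarAlgebra.isClosed_nonneg.preimage (f := fun y : A => star y * x * y) (by fun_prop))
    fun c => ?_
  simpa only [star_mul, mul_assoc] using star_left_conjugate_nonneg h c

end StrictlyPositive

section HomotopeEmbedding

variable {B C C' : Type*} [NonUnitalCStarAlgebra B] [PartialOrder B]
  [NonUnitalCStarAlgebra C] [PartialOrder C]
  [NonUnitalCStarAlgebra C'] [PartialOrder C']

/-- An order embedding that is a Jordan homomorphism from the `Q`-homotope of `B`, that is, from `B`
with the product `x * Q * y`, checked on the squares of self-adjoint elements. -/
structure IsHomotopeEmbedding (Q : B) (T : B →ₚ[ℂ] C) : Prop where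
  nonneg_of_map_nonneg : ∀ x, 0 ≤ T x → 0 ≤ x
  map_mul_self : ∀ x, IsSelfAdjoint x → T x * T x = T (x * Q * x)

theorem norm_le_iff_mul_self_le_smul [StarOrderedRing C] {z : C} (hz : 0 ≤ z) {t : ℝ}
    (ht : 0 ≤ t) : ‖z‖ ≤ t ↔ z * z ≤ t • z := by
  refine ⟨fun h => ?_, fun h => ?_⟩
  · obtain ⟨x, rfl⟩ := CStarAlgebra.nonneg_iff_eq_star_mul_self.1 hz
    calc star x * x * (star x * x) = star x * (x * star x) * x := by simp only [mul_assoc]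
      _ ≤ ‖x * star x‖ • (star x * x) :=
        CStarAlgebra.star_left_conjugate_le_norm_smul (.mul_star_self x)
      _ ≤ t • (star x * x) := by
        rw [CStarRing.norm_self_mul_star, ← CStarRing.norm_star_mul_self]
        exact smul_le_smul_of_nonneg_right h hz
  · have norm_sq : ‖z‖ * ‖z‖ ≤ t * ‖z‖ := by
      simpa only [hz.isSelfAdjoint.norm_mul_self, norm_smul, Real.norm_of_nonneg ht, pow_two] using
        CStarAlgebra.norm_le_norm_of_nonneg_of_le hz.isSelfAdjoint.mul_self_nonneg h
    nlinarith [norm_nonneg z]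

namespace IsHomotopeEmbedding

variable {Q : B} {T : B →ₚ[ℂ] C} {T' : B →ₚ[ℂ] C'}

theorem map_nonneg_iff (h : IsHomotopeEmbedding Q T) {x : B} : 0 ≤ T x ↔ 0 ≤ x :=
  ⟨h.nonneg_of_map_nonneg x, map_nonneg T⟩

theorem map_mul_add_mul_of_isSelfAdjoint (h : IsHomotopeEmbedding Q T) {x y : B}
    (hx : IsSelfAdjoint x) (hy : IsSelfAdjoint y) :
    T x * T y + T y * T x = T (x * Q * y + y * Q * x) := by
  have hxy := h.map_mul_self _ (hx.add hy)
  simp only [map_add, add_mul, mul_add, ← h.map_mul_self x hx, ← h.map_mul_self y hy] at hxy ⊢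
  linear_combination (norm := module) hxy

theorem map_mul_add_mul (h : IsHomotopeEmbedding Q T) (x y : B) :
    T x * T y + T y * T x = T (x * Q * y + y * Q * x) := by
  have mixed := fun {a b : B} => h.map_mul_add_mul_of_isSelfAdjoint (x := a) (y := b)
  have h₁ := mixed (ℜ x).2 (ℜ y).2
  have h₂ := mixed (ℜ x).2 (ℑ y).2
  have h₃ := mixed (ℑ x).2 (ℜ y).2
  have h₄ := mixed (ℑ x).2 (ℑ y).2
  rw [← realPart_add_I_smul_imaginaryPart x, ← realPart_add_I_smul_imaginaryPart y]
  simp only [map_add, map_smul, add_mul, mul_add, smul_mul_assoc, mul_smul_comm] at h₁ h₂ h₃ h₄ ⊢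
  linear_combination (norm := module) h₁ + Complex.I • h₂ + Complex.I • h₃ + (Complex.I ^ 2) • h₄

variable [StarOrderedRing B] [StarOrderedRing C] [StarOrderedRing C']

theorem norm_map_le_iff (h : IsHomotopeEmbedding Q T) {c : B} (hc : 0 ≤ c) {t : ℝ} (ht : 0 ≤ t) :
    ‖T c‖ ≤ t ↔ c * Q * c ≤ t • c := by
  rw [norm_le_iff_mul_self_le_smul (map_nonneg T hc) ht, h.map_mul_self c hc.isSelfAdjoint,
    ← T.map_smul_of_tower, ← sub_nonneg, ← map_sub, h.map_nonneg_iff, sub_nonneg]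

theorem norm_map_eq_of_nonneg (h : IsHomotopeEmbedding Q T) (h' : IsHomotopeEmbedding Q T')
    {c : B} (hc : 0 ≤ c) : ‖T c‖ = ‖T' c‖ :=
  le_antisymm ((h.norm_map_le_iff hc (norm_nonneg _)).2 <|
      (h'.norm_map_le_iff hc (norm_nonneg _)).1 le_rfl)
    ((h'.norm_map_le_iff hc (norm_nonneg _)).2 <| (h.norm_map_le_iff hc (norm_nonneg _)).1 le_rfl)

theorem norm_map_eq_of_isSelfAdjoint (hQ : 0 ≤ Q) (h : IsHomotopeEmbedding Q T)
    (h' : IsHomotopeEmbedding Q T') {x : B} (hx : IsSelfAdjoint x) : ‖T x‖ = ‖T' x‖ := by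
  rw [← sq_eq_sq₀ (norm_nonneg _) (norm_nonneg _), ← (hx.map T).norm_mul_self,
    ← (hx.map T').norm_mul_self, h.map_mul_self x hx, h'.map_mul_self x hx]
  exact h.norm_map_eq_of_nonneg h' (hx.conjugate_nonneg hQ)

theorem norm_map_le_two_mul (hQ : 0 ≤ Q) (h : IsHomotopeEmbedding Q T)
    (h' : IsHomotopeEmbedding Q T') (x : B) : ‖T' x‖ ≤ 2 * ‖T x‖ := by
  have real : ‖T (ℜ x)‖ ≤ ‖T x‖ := map_realPart T x ▸ realPart.norm_le (T x)
  have imag : ‖T (ℑ x)‖ ≤ ‖T x‖ := map_imaginaryPart T x ▸ imaginaryPart.norm_le (T x)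
  calc ‖T' x‖ = ‖T' (ℜ x) + Complex.I • T' (ℑ x)‖ := by
        rw [← map_smul, ← map_add, realPart_add_I_smul_imaginaryPart]
    _ ≤ ‖T' (ℜ x)‖ + ‖T' (ℑ x)‖ := by
        simpa only [norm_smul, Complex.norm_I, one_mul] using
          norm_add_le (T' (ℜ x)) (Complex.I • T' (ℑ x))
    _ = ‖T (ℜ x)‖ + ‖T (ℑ x)‖ := by
        rw [norm_map_eq_of_isSelfAdjoint hQ h h' (ℜ x).2,
          norm_map_eq_of_isSelfAdjoint hQ h h' (ℑ x).2]
    _ ≤ 2 * ‖T x‖ := by linarith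

theorem exists_jordan_linearEquiv (hQ : 0 ≤ Q) (h : IsHomotopeEmbedding Q T)
    (h' : IsHomotopeEmbedding Q T') (hT : DenseRange T) (hT' : DenseRange T') :
    ∃ ψ : C ≃ₗ[ℂ] C', (∀ x, ψ (star x) = star (ψ x)) ∧
      ∀ x y, ψ (x * y + y * x) = ψ x * ψ y + ψ y * ψ x := by
  let ψ : C ≃L[ℂ] C' := (LinearEquiv.refl ℂ B).extend T.toLinearMap T'.toLinearMap
    hT ⟨2, norm_map_le_two_mul hQ h h'⟩ hT' ⟨2, norm_map_le_two_mul hQ h' h⟩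
  have hψ : ∀ b, ψ (T b) = T' b := fun b => LinearEquiv.extend_eq _ _ _ _ _ _ _ _
  refine ⟨ψ.toLinearEquiv, fun x => ?_, fun x y => ?_⟩
  · refine hT.induction_on (p := fun x => ψ (star x) = star (ψ x)) x
      (isClosed_eq (by fun_prop) (by fun_prop)) fun b => ?_
    rw [← map_star T, hψ, hψ, map_star T']
  · refine hT.induction_on₂ (p := fun x y => ψ (x * y + y * x) = ψ x * ψ y + ψ y * ψ x)
      (isClosed_eq (by fun_prop) (by fun_prop)) (fun a b => ?_) x y
    rw [h.map_mul_add_mul, hψ, hψ, hψ, h'.map_mul_add_mul]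

end IsHomotopeEmbedding

end HomotopeEmbedding

section OrderIsomorphism

variable {A B : Type*} [NonUnitalCStarAlgebra A] [PartialOrder A] [StarOrderedRing A]
  [NonUnitalCStarAlgebra B] [PartialOrder B] [StarOrderedRing B]

theorem isHomotopeEmbedding_conjugation {k : B} (hk : IsSelfAdjoint k)
    (hd : DenseRange (k * ·)) : IsHomotopeEmbedding (k * k) (conjugation k) where
  nonneg_of_map_nonneg _ := (conjugation_nonneg_iff hd).1
  map_mul_self x _ := by simp only [conjugation_apply, hk.star_eq, mul_assoc]

theorem isHomotopeEmbedding_comp_conjugation (F : B →ₚ[ℂ] A) (G : A →ₚ[ℂ] B)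
    (hGF : Function.LeftInverse G F) (hFG : Function.RightInverse G F) {e : B} (he : 0 ≤ e)
    (hd : DenseRange (e * ·)) :
    IsHomotopeEmbedding (G (F e * F e)) (F.comp (conjugation e)) where
  nonneg_of_map_nonneg x hx :=
    (conjugation_nonneg_iff hd).1 (hGF (conjugation e x) ▸ map_nonneg G hx)
  map_mul_self x hx := by
    change F (conjugation e x) * F (conjugation e x) = F (conjugation e _)
    simp only [conjugation_apply, he.isSelfAdjoint.star_eq]
    rw [← map_mul_self_of_leftInverse F G hGF he hx, hFG]

theorem exists_jordan_linearEquiv_of_leftInverse (F : B →ₚ[ℂ] A) (G : A →ₚ[ℂ] B)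
    (hGF : Function.LeftInverse G F) (hFG : Function.RightInverse G F) {e : B} (he : 0 ≤ e)
    (hd : DenseRange (e * ·)) :
    ∃ ψ : B ≃ₗ[ℂ] A, (∀ x, ψ (star x) = star (ψ x)) ∧
      ∀ x y, ψ (x * y + y * x) = ψ x * ψ y + ψ y * ψ x := by
  have hp : IsSelfAdjoint (F e) := he.isSelfAdjoint.map F
  have hQ : 0 ≤ G (F e * F e) := map_nonneg G hp.mul_self_nonneg
  obtain ⟨k, hk, hkk⟩ : ∃ k : B, IsSelfAdjoint k ∧ k * k = G (F e * F e) :=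
    ⟨CFC.sqrt _, (CFC.sqrt_nonneg _).isSelfAdjoint, CFC.sqrt_mul_sqrt_self _ hQ⟩
  have hkd : DenseRange (k * ·) := by
    obtain ⟨K, hK, hG⟩ := exists_map_mul_self_le G
    have le : e * e ≤ K • (k * k) := by simpa only [hGF e, hkk] using hG (F e) hp
    exact denseRange_mul_of_mul_self_le he.isSelfAdjoint hk hK le hd
  have hF : IsHomotopeEmbedding (k * k) (F.comp (conjugation e)) :=
    hkk ▸ isHomotopeEmbedding_comp_conjugation F G hGF hFG he hd
  exact IsHomotopeEmbedding.exists_jordan_linearEquiv (hkk ▸ hQ)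
    (isHomotopeEmbedding_conjugation hk hkd) hF (denseRange_conjugation hk hkd)
    (hFG.surjective.denseRange.comp (denseRange_conjugation he.isSelfAdjoint hd)
      (map_continuous F))

end OrderIsomorphism

theorem stmt7 {A B : Type*} [NonUnitalCStarAlgebra A] [NonUnitalCStarAlgebra B]
    -- `B` is σ-unital
    (hσ : ∃ e : B, (∃ f : B, e = star f * f) ∧ Dense (Set.range fun b : B => e * b))
    -- `φ` is an order isomorphism from `B` onto `A`: a linear bijection with `φ(B₊) = A₊`
    (φ : B ≃ₗ[ℂ] A)
    (hpos : ⇑φ '' {x : B | ∃ y : B, x = star y * y} = {x : A | ∃ y : A, x = star y * y}) :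
    -- there is a Jordan isomorphism `ψ : B → A`
    ∃ ψ : B ≃ₗ[ℂ] A,
      (∀ x : B, ψ (star x) = star (ψ x)) ∧
      (∀ x y : B, ψ ((2 : ℂ)⁻¹ • (x * y + y * x)) =
        (2 : ℂ)⁻¹ • (ψ x * ψ y + ψ y * ψ x)) := by
  let _ := CStarAlgebra.spectralOrder A
  let _ := CStarAlgebra.spectralOrder B
  have _ := CStarAlgebra.spectralOrderedRing A
  have _ := CStarAlgebra.spectralOrderedRing B
  obtain ⟨e, he, hd⟩ := hσ
  simp only [← CStarAlgebra.nonneg_iff_eq_star_mul_self] at hpos he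
  let F : B →ₚ[ℂ] A := .mk₀ φ.toLinearMap fun x hx => hpos.subset ⟨x, hx, rfl⟩
  let G : A →ₚ[ℂ] B := .mk₀ φ.symm.toLinearMap fun y hy => by
    obtain ⟨x, hx, rfl⟩ := hpos.superset hy
    simpa using hx
  obtain ⟨ψ, hψ_star, hψ_mul⟩ := exists_jordan_linearEquiv_of_leftInverse F G
    φ.symm_apply_apply φ.apply_symm_apply he hd
  exact ⟨ψ, hψ_star, fun x y => by rw [map_smul, hψ_mul]⟩
end

section
/- Let H be a complex Hilbert space and A ⊆ B(H) a nondegenerate σ-unital C*-subalgebra. If h ∈ B(H) is positive, invertible in B(H), and satisfies a h a' ∈ A for all a, a' ∈ A (h is a quasi-multiplier of A), then there exists an invertible operator S ∈ B(H) with SA ⊆ A (S is a left multiplier of A) and S*S = h. -/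
/-!
Let `e` be a strictly positive element of `A` and put `k = (e h e)^{1/2}`, which lies in `A` because
`h` is a quasi-multiplier. Since `‖k x‖² = ⟪h (e x), e x⟫ ≤ ‖h‖ ‖e x‖²` and `e` has dense range, `k`
factors as `k = S e` with `S` bounded, and `e (S* S) e = k² = e h e` gives `S* S = h`. From
`S (e a) = k a ∈ A` and the density of `e A` in `A` it follows that `S A ⊆ A`. If `h` is invertible,
then `S` and `e`, hence also `k = S e`, are left cancellable; taking adjoints, `k` is right
cancellable, hence so is `S`, and a left invertible right cancellable element is invertible.
-/

open ContinuousLinearMap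

variable {H : Type*} [NormedAddCommGroup H] [InnerProductSpace ℂ H] [CompleteSpace H]

section Algebra

theorem isUnit_of_mul_eq_one_of_isRightRegular {M : Type*} [Monoid M] {l s : M}
    (hls : l * s = 1) (hs : IsRightRegular s) : IsUnit s :=
  ⟨⟨s, l, hs (by simp only [mul_assoc, hls, mul_one, one_mul]), hls⟩, rfl⟩

theorem isUnit_of_isUnit_star_mul_self {M : Type*} [Monoid M] [StarMul M] {s e : M}
    (hs : IsUnit (star s * s)) (he : IsSelfAdjoint e) (he_reg : IsRightRegular e)
    (hse : IsSelfAdjoint (s * e)) : IsUnit s := by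
  have he_left : IsLeftRegular e := he.star_eq ▸ he_reg.star
  have hse_left : IsLeftRegular (s * e) := hs.isRegular.left.of_mul.mul he_left
  have hse_right : IsRightRegular (s * e) := hse.star_eq ▸ hse_left.star
  obtain ⟨l, hl⟩ := hs.exists_left_inv
  exact isUnit_of_mul_eq_one_of_isRightRegular ((mul_assoc l (star s) s).trans hl) hse_right.of_mul

theorem mul_mem_of_subset_closure {M σ : Type*} [TopologicalSpace M] [Semigroup M]
    [SeparatelyContinuousMul M] [SetLike σ M] [MulMemClass σ M] {A : σ}
    (hA : IsClosed (A : Set M)) {e s a : M}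
    (he : (A : Set M) ⊆ closure {y | ∃ b ∈ A, y = e * b}) (hse : s * e ∈ A) (ha : a ∈ A) :
    s * a ∈ A := by
  have hmaps : Set.MapsTo (s * ·) {y | ∃ b ∈ A, y = e * b} A := by
    rintro _ ⟨b, hb, rfl⟩
    simpa only [mul_assoc, SetLike.mem_coe] using mul_mem hse hb
  exact hmaps.closure_left (continuous_const_mul s) hA (he ha)

theorem cfcSqrt_mem {B : Type*} [NonUnitalCStarAlgebra B] [PartialOrder B] [StarOrderedRing B]
    {A : NonUnitalStarSubalgebra ℂ B} (hA : IsClosed (A : Set B)) {a : B} (ha : 0 ≤ a)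
    (haA : a ∈ A) : CFC.sqrt a ∈ A := by
  rw [CFC.sqrt_eq_real_sqrt a ha]
  exact cfcₙ_mem (𝕜' := ℂ) (hs := hA) _ haA

end Algebra

section DenseRange

theorem isRightRegular_of_denseRange {R E : Type*} [Semiring R] [TopologicalSpace E] [T2Space E]
    [AddCommMonoid E] [Module R E] {T : E →L[R] E} (hT : DenseRange T) : IsRightRegular T := by
  intro X Y hXY
  exact DFunLike.coe_injective (hT.equalizer X.continuous Y.continuous (congrArg DFunLike.coe hXY))

theorem denseRange_of_subset_closure_comp {𝕜 E F G : Type*} [NontriviallyNormedField 𝕜]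
    [NormedAddCommGroup E] [NormedSpace 𝕜 E] [NormedAddCommGroup F] [NormedSpace 𝕜 F]
    [NormedAddCommGroup G] [NormedSpace 𝕜 G] {A : Set (E →L[𝕜] F)} {e : G →L[𝕜] F}
    (hA : Dense (Submodule.span 𝕜 {v : F | ∃ a ∈ A, ∃ x, a x = v} : Set F))
    (he : A ⊆ closure (Set.range fun T : E →L[𝕜] G ↦ e ∘L T)) : DenseRange e := by
  have hspan : Submodule.span 𝕜 {v : F | ∃ a ∈ A, ∃ x, a x = v} ≤ e.range.topologicalClosure := by
    rw [Submodule.span_le]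
    rintro _ ⟨a, ha, x, rfl⟩
    have hmaps : Set.MapsTo (fun T : E →L[𝕜] F ↦ T x) (Set.range fun T : E →L[𝕜] G ↦ e ∘L T)
        (Set.range e) := by
      rintro _ ⟨T, rfl⟩
      exact ⟨T x, rfl⟩
    exact hmaps.closure (by fun_prop) (he ha)
  exact dense_closure.mp (hA.mono hspan)

end DenseRange

section Factorization

variable {𝕜 E F G : Type*} [RCLike 𝕜]
  [NormedAddCommGroup E] [InnerProductSpace 𝕜 E] [CompleteSpace E]
  [NormedAddCommGroup F] [InnerProductSpace 𝕜 F] [CompleteSpace F]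
  [NormedAddCommGroup G] [InnerProductSpace 𝕜 G] [CompleteSpace G]
  {e : E →L[𝕜] F} {h : F →L[𝕜] F} {k : E →L[𝕜] G}

theorem inner_apply_apply_of_adjoint_comp_eq (hk : adjoint k ∘L k = adjoint e ∘L h ∘L e)
    (x y : E) : inner 𝕜 (k x) (k y) = inner 𝕜 (e x) (h (e y)) :=
  calc
    inner 𝕜 (k x) (k y) = inner 𝕜 x ((adjoint k ∘L k) y) := (adjoint_inner_right k x (k y)).symm
    _ = inner 𝕜 x ((adjoint e ∘L h ∘L e) y) := by rw [hk]
    _ = inner 𝕜 (e x) (h (e y)) := adjoint_inner_right e x (h (e y))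

theorem norm_apply_le_of_adjoint_comp_eq (hk : adjoint k ∘L k = adjoint e ∘L h ∘L e) (x : E) :
    ‖k x‖ ≤ √‖h‖ * ‖e x‖ := by
  refine le_of_sq_le_sq ?_ (by positivity)
  calc
    ‖k x‖ ^ 2 = ‖inner 𝕜 (k x) (k x)‖ := by rw [inner_self_eq_norm_sq_to_K]; simp
    _ = ‖inner 𝕜 (e x) (h (e x))‖ := by rw [inner_apply_apply_of_adjoint_comp_eq hk]
    _ ≤ ‖e x‖ * ‖h (e x)‖ := norm_inner_le_norm _ _
    _ ≤ ‖e x‖ * (‖h‖ * ‖e x‖) := by gcongr; exact h.le_opNorm _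
    _ = (√‖h‖ * ‖e x‖) ^ 2 := by rw [mul_pow, Real.sq_sqrt (norm_nonneg h)]; ring

theorem adjoint_comp_self_eq_of_denseRange (he : DenseRange e) {S : F →L[𝕜] G}
    (hS : adjoint (S ∘L e) ∘L (S ∘L e) = adjoint e ∘L h ∘L e) : adjoint S ∘L S = h := by
  have hform (u v : F) : inner 𝕜 (S u) (S v) = inner 𝕜 u (h v) := by
    refine he.induction_on₂ (isClosed_eq (by fun_prop) (by fun_prop)) (fun x y ↦ ?_) u v
    exact inner_apply_apply_of_adjoint_comp_eq hS x y
  ext v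
  refine ext_inner_left 𝕜 fun u ↦ ?_
  rw [comp_apply, adjoint_inner_right, hform]

theorem exists_comp_eq_and_adjoint_comp_self_eq (he : DenseRange e)
    (hk : adjoint k ∘L k = adjoint e ∘L h ∘L e) :
    ∃ S : F →L[𝕜] G, S ∘L e = k ∧ adjoint S ∘L S = h := by
  obtain ⟨S, rfl⟩ : ∃ S : F →L[𝕜] G, S ∘L e = k :=
    ⟨(k : E →ₗ[𝕜] G).extendOfNorm (e : E →ₗ[𝕜] F), ContinuousLinearMap.ext fun x ↦
      LinearMap.extendOfNorm_eq (f := (k : E →ₗ[𝕜] G)) (e := (e : E →ₗ[𝕜] F)) he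
        ⟨√‖h‖, norm_apply_le_of_adjoint_comp_eq hk⟩ x⟩
  exact ⟨S, rfl, adjoint_comp_self_eq_of_denseRange he hk⟩

end Factorization

theorem stmt8_general
    (A : NonUnitalStarSubalgebra ℂ (H →L[ℂ] H))
    (hAc : IsClosed (A : Set (H →L[ℂ] H)))
    (hnd : Dense (Submodule.span ℂ {v : H | ∃ a ∈ A, ∃ ξ : H, a ξ = v} : Set H))
    (hσ : ∃ e ∈ A, IsSelfAdjoint e ∧
      (A : Set (H →L[ℂ] H)) ⊆ closure {y : H →L[ℂ] H | ∃ a ∈ A, y = e * a})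
    (h : H →L[ℂ] H) (hpos : 0 ≤ h)
    (hqm : ∀ a ∈ A, ∀ a' ∈ A, a * h * a' ∈ A) :
    ∃ S : H →L[ℂ] H, (IsUnit h → IsUnit S) ∧ (∀ a ∈ A, S * a ∈ A) ∧ star S * S = h := by
  obtain ⟨e, heA, he_sa, he_closure⟩ := hσ
  have he : DenseRange e := denseRange_of_subset_closure_comp hnd <|
    he_closure.trans <| closure_mono fun _ ⟨a, _, ha⟩ ↦ ⟨a, ha.symm⟩
  have hehe : 0 ≤ e * h * e := he_sa.conjugate_nonneg hpos
  have hk : IsSelfAdjoint (CFC.sqrt (e * h * e)) := (CFC.sqrt_nonneg _).isSelfAdjoint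
  have hk_sq : star (CFC.sqrt (e * h * e)) * CFC.sqrt (e * h * e) = star e * (h * e) := by
    rw [hk.star_eq, he_sa.star_eq, CFC.sqrt_mul_sqrt_self _ hehe, mul_assoc]
  obtain ⟨S, hSe, hSh⟩ : ∃ S, S * e = CFC.sqrt (e * h * e) ∧ star S * S = h :=
    exists_comp_eq_and_adjoint_comp_self_eq he hk_sq
  have hSeA : S * e ∈ A := hSe ▸ cfcSqrt_mem hAc hehe (hqm e heA e heA)
  refine ⟨S, fun hu ↦ ?_, fun a ha ↦ mul_mem_of_subset_closure hAc he_closure hSeA ha, hSh⟩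
  exact isUnit_of_isUnit_star_mul_self (hSh ▸ hu) he_sa (isRightRegular_of_denseRange he)
    (hSe ▸ hk)

theorem stmt8
    (A : NonUnitalStarSubalgebra ℂ (H →L[ℂ] H))
    (hAc : IsClosed (A : Set (H →L[ℂ] H)))
    -- `A` is nondegenerate
    (hnd : Dense (Submodule.span ℂ {v : H | ∃ a ∈ A, ∃ ξ : H, a ξ = v} : Set H))
    -- `A` is σ-unital
    (hσ : ∃ e ∈ A, 0 ≤ e ∧
      (A : Set (H →L[ℂ] H)) ⊆ closure {y : H →L[ℂ] H | ∃ a ∈ A, y = e * a})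
    -- `h` is a positive invertible quasi-multiplier of `A`
    (h : H →L[ℂ] H) (hpos : 0 ≤ h) (hinv : IsUnit h)
    (hqm : ∀ a ∈ A, ∀ a' ∈ A, a * h * a' ∈ A) :
    ∃ S : H →L[ℂ] H, IsUnit S ∧ (∀ a ∈ A, S * a ∈ A) ∧ star S * S = h := by
  obtain ⟨e, heA, he, he_closure⟩ := hσ
  obtain ⟨S, hS, hSA, hSh⟩ :=
    stmt8_general A hAc hnd ⟨e, heA, he.isSelfAdjoint, he_closure⟩ h hpos hqm
  exact ⟨S, hS hinv, hSA, hSh⟩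
end

section
/- Let H be a complex Hilbert space and A ⊆ B(H) a nondegenerate σ-unital C*-subalgebra. If R ∈ B(H) satisfies ‖R‖ ≤ 1 and a R a' ∈ A for all a, a' ∈ A (R is a quasi-multiplier of A), then there exist operators L₁₁, L₁₂, L₂₁, L₂₂ ∈ B(H), each satisfying Lᵢⱼ A ⊆ A (each is a left multiplier of A), such that L₁₁*L₁₁ + L₂₁*L₂₁ = 1, L₁₂*L₁₂ + L₂₂*L₂₂ = 1, and R = L₁₁*L₁₂ + L₂₁*L₂₂. -/
/-
The matrix `G` with rows `(1, R)` and `(R*, 1)` is positive because `‖R‖ ≤ 1`, so it suffices to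
write a positive matrix of quasi-multipliers as `L* L` with `L` a matrix of left multipliers.
If `e` is strictly positive in `A`, then `e* G e` (entrywise) is a positive matrix over `A`, hence
equal to `b* b` for some matrix `b` over `A`. Each entry satisfies `bᵢⱼ* bᵢⱼ ≤ ‖Gⱼⱼ‖ e* e`, so
Douglas factorization gives `bᵢⱼ = Lᵢⱼ e`. Since `e A` is dense in `A`, each `Lᵢⱼ` is a left
multiplier; since `e` has dense range, `e* (L* L) e = e* G e` yields `L* L = G`.
-/

open ContinuousLinearMap

variable {H : Type*} [NormedAddCommGroup H] [InnerProductSpace ℂ H] [CompleteSpace H]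

section Multipliers

variable {S D : Type*} [SetLike S D]

/-- `T` is a left multiplier of `A`: left multiplication by `T` maps `A` into itself. -/
def IsLeftMultiplier [Mul D] (A : S) (T : D) : Prop :=
  ∀ a ∈ A, T * a ∈ A

/-- `T` is a quasi-multiplier of `A`: it is carried into `A` by multiplication by `A` on both sides
simultaneously. -/
def IsQuasiMultiplier [Mul D] (A : S) (T : D) : Prop :=
  ∀ a ∈ A, ∀ a' ∈ A, a * T * a' ∈ A

theorem isQuasiMultiplier_one [MulOneClass D] [MulMemClass S D] (A : S) :
    IsQuasiMultiplier A (1 : D) :=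
  fun a ha a' ha' ↦ by simpa only [mul_one] using mul_mem ha ha'

theorem IsQuasiMultiplier.star [Semigroup D] [StarMul D] [StarMemClass S D] {A : S} {T : D}
    (hT : IsQuasiMultiplier A T) : IsQuasiMultiplier A (star T) :=
  fun a ha a' ha' ↦ by
    simpa only [star_mul, star_star, mul_assoc] using
      star_mem (hT _ (star_mem ha') _ (star_mem ha))

theorem isLeftMultiplier_of_mul_mem [Semigroup D] [TopologicalSpace D] [SeparatelyContinuousMul D]
    [MulMemClass S D] {A : S} (hA : IsClosed (A : Set D)) {e T : D}
    (he : (A : Set D) ⊆ closure ((e * ·) '' A)) (hT : T * e ∈ A) : IsLeftMultiplier A T := by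
  have hmaps : Set.MapsTo (T * ·) ((e * ·) '' (A : Set D)) A := by
    rintro _ ⟨a, ha, rfl⟩
    simpa only [SetLike.mem_coe, mul_assoc] using mul_mem hT ha
  intro a ha
  exact hA.closure_subset (map_mem_closure (continuous_const_mul T) (he ha) hmaps)

end Multipliers

section DenseRange

theorem denseRange_of_subset_closure_mul {𝕜 E : Type*} [NontriviallyNormedField 𝕜]
    [SeminormedAddCommGroup E] [NormedSpace 𝕜 E] {s t : Set (E →L[𝕜] E)} {e : E →L[𝕜] E}
    (hs : Dense (Submodule.span 𝕜 {v : E | ∃ a ∈ s, ∃ ξ : E, a ξ = v} : Set E))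
    (hst : s ⊆ closure ((e * ·) '' t)) : DenseRange e := by
  have hle : Submodule.span 𝕜 {v : E | ∃ a ∈ s, ∃ ξ : E, a ξ = v} ≤
      e.range.topologicalClosure := by
    rw [Submodule.span_le]
    rintro _ ⟨a, ha, ξ, rfl⟩
    refine map_mem_closure (f := fun T : E →L[𝕜] E ↦ T ξ) (by fun_prop) (hst ha) ?_
    rintro _ ⟨a', -, rfl⟩
    exact ⟨a' ξ, rfl⟩
  exact (hs.mono hle).of_closure

variable {𝕜 E F : Type*} [RCLike 𝕜] [NormedAddCommGroup E] [InnerProductSpace 𝕜 E]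
  [CompleteSpace E] [NormedAddCommGroup F] [InnerProductSpace 𝕜 F] [CompleteSpace F]

theorem injective_adjoint_comp_comp_of_denseRange {e : E →L[𝕜] F} (he : DenseRange e) :
    Function.Injective fun X : F →L[𝕜] F ↦ adjoint e ∘L X ∘L e := by
  intro X Y hXY
  have hrange (x : E) : X (e x) = Y (e x) := he.eq_of_inner_right 𝕜 fun z ↦ by
    simpa only [comp_apply, adjoint_inner_right] using
      congrArg (fun T : E →L[𝕜] E ↦ inner 𝕜 z (T x)) hXY
  exact DFunLike.coe_injective (he.equalizer X.continuous Y.continuous (funext hrange))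

end DenseRange

section DouglasFactorization

variable {E F G : Type*} [NormedAddCommGroup E] [InnerProductSpace ℂ E] [CompleteSpace E]
  [NormedAddCommGroup F] [InnerProductSpace ℂ F] [CompleteSpace F]
  [NormedAddCommGroup G] [InnerProductSpace ℂ G] [CompleteSpace G]

theorem norm_apply_le_of_adjoint_comp_self_le {b : E →L[ℂ] F} {e : E →L[ℂ] G} {c : ℝ}
    (h : adjoint b ∘L b ≤ c • (adjoint e ∘L e)) (x : E) : ‖b x‖ ≤ √c * ‖e x‖ := by
  have hsq : ‖b x‖ ^ 2 ≤ c * ‖e x‖ ^ 2 := by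
    have hpos := ((le_def _ _).mp h).re_inner_nonneg_left x
    rw [sub_apply, inner_sub_left, map_sub, smul_apply, inner_smul_left_eq_smul,
      RCLike.smul_re, ← apply_norm_sq_eq_inner_adjoint_left,
      ← apply_norm_sq_eq_inner_adjoint_left] at hpos
    exact sub_nonneg.mp hpos
  calc ‖b x‖ = √(‖b x‖ ^ 2) := (Real.sqrt_sq (norm_nonneg _)).symm
    _ ≤ √(c * ‖e x‖ ^ 2) := Real.sqrt_le_sqrt hsq
    _ = √c * ‖e x‖ := by rw [Real.sqrt_mul' _ (sq_nonneg _), Real.sqrt_sq (norm_nonneg _)]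

theorem exists_comp_eq_of_adjoint_comp_self_le {b : E →L[ℂ] F} {e : E →L[ℂ] G} {c : ℝ}
    (he : DenseRange e) (h : adjoint b ∘L b ≤ c • (adjoint e ∘L e)) :
    ∃ L : G →L[ℂ] F, L ∘L e = b :=
  ⟨(b : E →ₗ[ℂ] F).extendOfNorm (e : E →ₗ[ℂ] G), ContinuousLinearMap.ext fun x ↦
    LinearMap.extendOfNorm_eq (f := (b : E →ₗ[ℂ] F)) (e := (e : E →ₗ[ℂ] G)) he
      ⟨√c, norm_apply_le_of_adjoint_comp_self_le h⟩ x⟩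

end DouglasFactorization

theorem exists_mem_star_mul_self_eq {B : Type*} [NonUnitalCStarAlgebra B] [PartialOrder B]
    [StarOrderedRing B] {S : NonUnitalStarSubalgebra ℂ B} (hS : IsClosed (S : Set B)) {a : B}
    (ha : a ∈ S) (ha₀ : 0 ≤ a) : ∃ b ∈ S, star b * b = a := by
  refine ⟨CFC.sqrt a, ?_, ?_⟩
  · rw [CFC.sqrt_eq_real_sqrt a]
    exact cfcₙ_mem (𝕜 := ℝ) (𝕜' := ℂ) (hs := hS) _ ha
  · rw [(CFC.sqrt_nonneg a).star_eq, CFC.sqrt_mul_sqrt_self a]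

section Matrix

variable {n 𝕜 D : Type*} [Fintype n]

theorem star_apply_mul_apply_le_star_mul_self_apply [NonUnitalSemiring D] [PartialOrder D]
    [StarRing D] [StarOrderedRing D] (M : CStarMatrix n n D) (i j : n) :
    star (M i j) * M i j ≤ (star M * M) j j := by
  simp only [CStarMatrix.mul_apply, CStarMatrix.star_apply]
  exact Finset.single_le_sum (f := fun k ↦ star (M k j) * M k j)
    (fun k _ ↦ star_mul_self_nonneg _) (Finset.mem_univ i)

section Subalgebra

variable [CommSemiring 𝕜] [NonUnitalNonAssocSemiring D] [Module 𝕜 D] [Star D]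
  {A : NonUnitalStarSubalgebra 𝕜 D}

variable (n A) in
/-- The star subalgebra of matrices with entries in `A`, in which square roots are taken. -/
def matrixSubalgebra : NonUnitalStarSubalgebra 𝕜 (CStarMatrix n n D) where
  carrier := {M | ∀ i j, M i j ∈ A}
  add_mem' hM hN i j := add_mem (hM i j) (hN i j)
  zero_mem' _ _ := zero_mem A
  mul_mem' hM hN i j := by
    rw [CStarMatrix.mul_apply]
    exact sum_mem fun k _ ↦ mul_mem (hM i k) (hN k j)
  smul_mem' c _ hM i j := SMulMemClass.smul_mem c (hM i j)
  star_mem' hM i j := by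
    rw [CStarMatrix.star_apply]
    exact star_mem (hM j i)

theorem mem_matrixSubalgebra {M : CStarMatrix n n D} :
    M ∈ matrixSubalgebra n A ↔ ∀ i j, M i j ∈ A :=
  Iff.rfl

end Subalgebra

variable [NonUnitalCStarAlgebra D]

theorem isClosed_matrixSubalgebra {A : NonUnitalStarSubalgebra ℂ D} (hA : IsClosed (A : Set D)) :
    IsClosed (matrixSubalgebra n A : Set (CStarMatrix n n D)) := by
  have hcont (i j : n) : Continuous fun M : CStarMatrix n n D ↦ M i j :=
    (continuous_apply j).comp (continuous_apply i)
  have hset : (matrixSubalgebra n A : Set (CStarMatrix n n D)) =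
      ⋂ i, ⋂ j, {M : CStarMatrix n n D | M i j ∈ A} := by
    ext M
    simp only [SetLike.mem_coe, mem_matrixSubalgebra, Set.mem_iInter, Set.mem_ofPred_eq]
  rw [hset]
  exact isClosed_iInter fun i ↦ isClosed_iInter fun j ↦ hA.preimage (hcont i j)

variable [PartialOrder D] [StarOrderedRing D]

theorem map_star_mul_mul_nonneg_s10 {G : CStarMatrix n n D} (hG : 0 ≤ G) (e : D) :
    0 ≤ G.map (star e * · * e) := by
  -- `CStarAlgebra.nonneg_iff_eq_star_mul_self` fails to find its `ℝ`-instances on `CStarMatrix`.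
  obtain ⟨C, -, rfl⟩ := exists_mem_star_mul_self_eq (S := ⊤) isClosed_univ
    NonUnitalStarAlgebra.mem_top hG
  suffices (star C * C).map (star e * · * e) = star (C.map (· * e)) * C.map (· * e) from
    this ▸ star_mul_self_nonneg _
  ext i j
  simp only [CStarMatrix.mul_apply, CStarMatrix.star_apply,
    CStarMatrix.map_apply, star_mul, Finset.mul_sum, Finset.sum_mul, mul_assoc]

theorem exists_matrix_mem_star_mul_self_eq {A : NonUnitalStarSubalgebra ℂ D}
    (hA : IsClosed (A : Set D)) {e : D} (he : e ∈ A) {G : CStarMatrix n n D} (hG : 0 ≤ G)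
    (hq : ∀ i j, IsQuasiMultiplier A (G i j)) :
    ∃ b : CStarMatrix n n D, (∀ i j, b i j ∈ A) ∧
      ∀ i j, (star b * b) i j = star e * G i j * e := by
  have hmem : G.map (star e * · * e) ∈ matrixSubalgebra n A := fun i j ↦
    hq i j _ (star_mem he) e he
  obtain ⟨b, hb, hbG⟩ := exists_mem_star_mul_self_eq (isClosed_matrixSubalgebra hA) hmem
    (map_star_mul_mul_nonneg_s10 hG e)
  exact ⟨b, hb, fun i j ↦ by rw [hbG, CStarMatrix.map_apply]⟩

theorem ofMatrix_nonneg_of_norm_le_one {D : Type*} [CStarAlgebra D] [PartialOrder D]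
    [StarOrderedRing D] {R : D} (hR : ‖R‖ ≤ 1) :
    0 ≤ CStarMatrix.ofMatrix !![1, R; star R, 1] := by
  have hdefect : 0 ≤ 1 - star R * R := by
    rw [sub_nonneg, ← CStarAlgebra.norm_le_one_iff_of_nonneg _ (star_mul_self_nonneg R),
      CStarRing.norm_star_mul_self]
    exact mul_le_one₀ hR (norm_nonneg _) hR
  obtain ⟨s, hs⟩ := CStarAlgebra.nonneg_iff_eq_star_mul_self.mp hdefect
  let C : CStarMatrix (Fin 2) (Fin 2) D := CStarMatrix.ofMatrix !![1, R; 0, s]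
  suffices CStarMatrix.ofMatrix !![1, R; star R, 1] = star C * C from this ▸ star_mul_self_nonneg C
  ext i j
  fin_cases i <;> fin_cases j <;>
    simp [CStarMatrix.mul_apply, CStarMatrix.star_apply, C, ← hs]

end Matrix

theorem exists_isLeftMultiplier_star_mul_self_eq {n : Type*} [Fintype n]
    {A : NonUnitalStarSubalgebra ℂ (H →L[ℂ] H)} (hA : IsClosed (A : Set (H →L[ℂ] H)))
    {e : H →L[ℂ] H} (heA : e ∈ A) (he : DenseRange e)
    (hdense : (A : Set (H →L[ℂ] H)) ⊆ closure ((e * ·) '' A))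
    {G : CStarMatrix n n (H →L[ℂ] H)} (hG : 0 ≤ G) (hq : ∀ i j, IsQuasiMultiplier A (G i j)) :
    ∃ L : CStarMatrix n n (H →L[ℂ] H), (∀ i j, IsLeftMultiplier A (L i j)) ∧ star L * L = G := by
  obtain ⟨b, hbA, hbG⟩ := exists_matrix_mem_star_mul_self_eq hA heA hG hq
  have hGsa (j : n) : IsSelfAdjoint (G j j) :=
    CStarMatrix.star_apply_of_isSelfAdjoint (.of_nonneg hG)
  have hdom (i j : n) : star (b i j) * b i j ≤ ‖G j j‖ • (star e * e) := calc
    star (b i j) * b i j ≤ (star b * b) j j := star_apply_mul_apply_le_star_mul_self_apply b i j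
    _ = star e * G j j * e := hbG j j
    _ ≤ ‖G j j‖ • (star e * e) := CStarAlgebra.star_left_conjugate_le_norm_smul (hGsa j)
  obtain ⟨L, hL⟩ : ∃ L : CStarMatrix n n (H →L[ℂ] H), ∀ i j, L i j * e = b i j := by
    choose L hL using fun i j ↦ exists_comp_eq_of_adjoint_comp_self_le he (hdom i j)
    exact ⟨CStarMatrix.ofMatrix L, hL⟩
  have hconj (i j : n) : star e * ((star L * L) i j * e) = star e * (G i j * e) := by
    rw [← mul_assoc _ (G i j), ← hbG]
    simp only [CStarMatrix.mul_apply, CStarMatrix.star_apply, ← hL, star_mul, Finset.mul_sum,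
      Finset.sum_mul, mul_assoc]
  exact ⟨L, fun i j ↦ isLeftMultiplier_of_mul_mem hA hdense ((hL i j).symm ▸ hbA i j),
    CStarMatrix.ext fun i j ↦ injective_adjoint_comp_comp_of_denseRange he (hconj i j)⟩

theorem stmt10
    (A : NonUnitalStarSubalgebra ℂ (H →L[ℂ] H))
    (hAc : IsClosed (A : Set (H →L[ℂ] H)))
    -- `A` is nondegenerate
    (hnd : Dense (Submodule.span ℂ {v : H | ∃ a ∈ A, ∃ ξ : H, a ξ = v} : Set H))
    -- `A` is σ-unital
    (hσ : ∃ e ∈ A, 0 ≤ e ∧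
      (A : Set (H →L[ℂ] H)) ⊆ closure {y : H →L[ℂ] H | ∃ a ∈ A, y = e * a})
    -- `R` is a quasi-multiplier of `A` with `‖R‖ ≤ 1`
    (R : H →L[ℂ] H) (hR : ‖R‖ ≤ 1)
    (hqm : ∀ a ∈ A, ∀ a' ∈ A, a * R * a' ∈ A) :
    ∃ L₁₁ L₁₂ L₂₁ L₂₂ : H →L[ℂ] H,
      (∀ a ∈ A, L₁₁ * a ∈ A) ∧ (∀ a ∈ A, L₁₂ * a ∈ A) ∧
      (∀ a ∈ A, L₂₁ * a ∈ A) ∧ (∀ a ∈ A, L₂₂ * a ∈ A) ∧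
      star L₁₁ * L₁₁ + star L₂₁ * L₂₁ = 1 ∧
      star L₁₂ * L₁₂ + star L₂₂ * L₂₂ = 1 ∧
      R = star L₁₁ * L₁₂ + star L₂₁ * L₂₂ := by
  obtain ⟨e, heA, -, he⟩ := hσ
  have hdense : (A : Set (H →L[ℂ] H)) ⊆ closure ((e * ·) '' A) := by
    simpa only [Set.image, SetLike.mem_coe, eq_comm] using he
  have hq (i j : Fin 2) :
      IsQuasiMultiplier A (CStarMatrix.ofMatrix !![1, R; star R, 1] i j) := by
    have hR : IsQuasiMultiplier A R := hqm
    fin_cases i <;> fin_cases j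
    exacts [isQuasiMultiplier_one A, hR, hR.star, isQuasiMultiplier_one A]
  obtain ⟨L, hL, hLL⟩ := exists_isLeftMultiplier_star_mul_self_eq hAc heA
    (denseRange_of_subset_closure_mul hnd hdense) hdense (ofMatrix_nonneg_of_norm_le_one hR) hq
  have hentry (i j : Fin 2) : star (L 0 i) * L 0 j + star (L 1 i) * L 1 j =
      CStarMatrix.ofMatrix !![1, R; star R, 1] i j := by
    rw [← hLL, CStarMatrix.mul_apply, Fin.sum_univ_two, CStarMatrix.star_apply,
      CStarMatrix.star_apply]
  exact ⟨L 0 0, L 0 1, L 1 0, L 1 1, hL 0 0, hL 0 1, hL 1 0, hL 1 1,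
    hentry 0 0, hentry 1 1, (hentry 0 1).symm⟩
end

section
/- Let π : A → B be a surjective *-homomorphism of C*-algebras with A σ-unital, and let L : B → B be a bounded linear map satisfying L(bb') = L(b)b' for all b, b' ∈ B (L is a left centralizer of B). Then there exists a bounded linear map L̃ : A → A satisfying L̃(aa') = L̃(a)a' for all a, a' ∈ A, π(L̃(a)) = L(π(a)) for all a ∈ A, and ‖L̃‖ = ‖L‖. -/
/-!
A bounded left centralizer `L` of `B` is a strict limit of left multiplications by elements
`b n = L (v n)`, with `v n` in the unit ball, so it suffices to lift the `b n` one after the other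
to elements of norm at most `‖L‖` whose left multiplications converge strictly on `A`; by
σ-unitality, convergence on a single element `e` is enough.

Given a lift `t` of `b n` and any lift `s` of `b (n + 1)`, both of norm at most `M`, and an
approximate unit `w` of `ker π`, the blends `w t w + (1 - w) s (1 - w)` again lift `b (n + 1)` and
have norm at most `M`, because `w² + (1 - w)² ≤ 1`. Bounded functionals do not see the terms
`w t (1 - w)` and `(1 - w) s w` in the limit, so the blends differ from `t` weakly
asymptotically by `(1 - w) (s - t)`, and `‖(1 - w) (s - t) e‖` tends to
`‖(b (n + 1) - b n) (π e)‖`. The lifts of `b (n + 1)` in the ball of radius `M` form a convex set,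
so Hahn–Banach replaces the weak approximation by a norm approximation.
-/

open Filter Topology Metric
open scoped CStarAlgebra Pointwise

section Cutoff

variable {A B : Type*} [NonUnitalCStarAlgebra A] [NonUnitalCStarAlgebra B]

theorem norm_sub_mul_cfcₙ_sq {f : ℝ → ℝ} (hf : Continuous f) (hf₀ : f 0 = 0) (a : A) :
    ‖a - a * cfcₙ f (star a * a)‖ ^ 2 =
      ‖cfcₙ (fun x => (1 - f x) * x * (1 - f x)) (star a * a)‖ := by
  set c := star a * a with hc
  set p := cfcₙ f c
  have hp : star p = p := IsSelfAdjoint.star_eq (cfcₙ_predicate f c)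
  have hc_sa : IsSelfAdjoint c := .star_mul_self a
  have hexpand : (fun x => (1 - f x) * x * (1 - f x)) =
      fun x => x - f x * x - (x * f x - f x * x * f x) := by
    ext x
    ring
  have hcfc : cfcₙ (fun x => (1 - f x) * x * (1 - f x)) c =
      c - p * c - (c * p - p * c * p) := by
    rw [hexpand, cfcₙ_sub (fun x => x - f x * x) (fun x => x * f x - f x * x * f x) c,
      cfcₙ_sub (fun x => x) (fun x => f x * x) c,
      cfcₙ_sub (fun x => x * f x) (fun x => f x * x * f x) c,
      cfcₙ_mul (fun x => f x * x) f c, cfcₙ_mul f (fun x => x) c, cfcₙ_mul (fun x => x) f c,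
      cfcₙ_id' ℝ c]
  rw [hcfc, sq, ← CStarRing.norm_star_mul_self, star_sub, star_mul, hp, hc]
  noncomm_ring

theorem norm_sub_mul_cfcₙ_le {f : ℝ → ℝ} (hf : Continuous f) (hf₀ : f 0 = 0) {β : ℝ} (hβ : 0 ≤ β)
    (hfβ : ∀ x, 0 ≤ x → (1 - f x) * x * (1 - f x) ≤ β ^ 2) (a : A) :
    ‖a - a * cfcₙ f (star a * a)‖ ≤ β := by
  let _ : PartialOrder A := CStarAlgebra.spectralOrder A
  have _ : StarOrderedRing A := CStarAlgebra.spectralOrderedRing A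
  refine le_of_sq_le_sq ?_ hβ
  rw [norm_sub_mul_cfcₙ_sq hf hf₀]
  refine norm_cfcₙ_le fun x hx => ?_
  have hx₀ : 0 ≤ x := quasispectrum_nonneg_of_nonneg _ (star_mul_self_nonneg a) x hx
  rw [mul_right_comm, ← sq, Real.norm_of_nonneg (by positivity), sq, mul_right_comm]
  exact hfβ x hx₀

theorem cfcₙ_star_mul_self_eq_zero {f : ℝ → ℝ} (b : B) (hf : ∀ x ≤ ‖b‖ ^ 2, f x = 0) :
    cfcₙ f (star b * b) = 0 := by
  rw [← cfcₙ_const_zero ℝ (star b * b)]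
  refine cfcₙ_congr fun x hx => hf x ?_
  have h := norm_apply_le_norm_cfcₙ (fun x : ℝ => x) (star b * b) hx
  rw [cfcₙ_id' ℝ (star b * b), CStarRing.norm_star_mul_self, ← sq] at h
  exact (le_abs_self x).trans h

theorem map_sub_mul_cfcₙ (π : A →⋆ₙₐ[ℂ] B) {f : ℝ → ℝ} (hf : Continuous f) (a : A)
    (hfπ : ∀ x ≤ ‖π a‖ ^ 2, f x = 0) : π (a - a * cfcₙ f (star a * a)) = π a := by
  have hπ : π (star a * a) = star (π a) * π a := by rw [map_mul, map_star]
  rw [map_sub, map_mul, NonUnitalStarAlgHom.map_cfcₙ π f (star a * a) hf.continuousOn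
    (hfπ 0 (sq_nonneg _)) (map_continuous π) (.star_mul_self a) (hπ ▸ .star_mul_self _), hπ,
    cfcₙ_star_mul_self_eq_zero (π a) hfπ, mul_zero, sub_zero]

theorem exists_map_eq_norm_eq (π : A →⋆ₙₐ[ℂ] B) (a : A) :
    ∃ a', π a' = π a ∧ ‖a'‖ = ‖π a‖ := by
  rcases (norm_nonneg (π a)).eq_or_lt with h₀ | hβ
  · exact ⟨0, by rw [map_zero, norm_eq_zero.1 h₀.symm], by rw [norm_zero, ← h₀]⟩
  set β := ‖π a‖
  let f : ℝ → ℝ := fun x => 1 - β / max β √x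
  have hmax (x : ℝ) : 0 < max β √x := lt_max_of_lt_left hβ
  have hf : Continuous f :=
    continuous_const.sub (continuous_const.div (by fun_prop) fun x => (hmax x).ne')
  have hf_zero (x : ℝ) (hx : x ≤ β ^ 2) : f x = 0 := by
    simp only [f, max_eq_left (Real.sqrt_le_iff.2 ⟨hβ.le, hx⟩), div_self hβ.ne', sub_self]
  have hf_bound (x : ℝ) (hx : 0 ≤ x) : (1 - f x) * x * (1 - f x) ≤ β ^ 2 :=
    calc (1 - f x) * x * (1 - f x) = (β * (√x / max β √x)) ^ 2 := by
          rw [mul_pow, div_pow, Real.sq_sqrt hx]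
          simp only [f]
          ring
      _ ≤ β ^ 2 := by
          have hratio : √x / max β √x ≤ 1 := (div_le_one (hmax x)).2 (le_max_right _ _)
          have := (hmax x).le
          gcongr
          exact mul_le_of_le_one_right hβ.le hratio
  have hπ := map_sub_mul_cfcₙ π hf a hf_zero
  exact ⟨_, hπ, le_antisymm (norm_sub_mul_cfcₙ_le hf (hf_zero 0 (sq_nonneg β)) hβ.le hf_bound a)
    ((congrArg norm hπ).ge.trans (NonUnitalStarAlgHom.norm_apply_le π _))⟩

end Cutoff

section Blend

theorem norm_mul_star_add_mul_star_le {A : Type*} [NonUnitalCStarAlgebra A] [PartialOrder A]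
    [StarOrderedRing A] (a b c d : A) :
    ‖a * star c + b * star d‖ ≤
      √‖a * star a + b * star b‖ * √‖c * star c + d * star d‖ := by
  have h := CStarModule.norm_inner_le (A := A) (WithCStarModule A (A × A))
    (x := (WithCStarModule.equiv A (A × A)).symm (c, d))
    (y := (WithCStarModule.equiv A (A × A)).symm (a, b))
  rw [mul_comm]
  exact h

theorem norm_conjugate_add_conjugate_le {A : Type*} [CStarAlgebra A] [PartialOrder A]
    [StarOrderedRing A] {a b t s : A} {M : ℝ} (hab : a * star a + b * star b ≤ 1)
    (ht : ‖t‖ ≤ M) (hs : ‖s‖ ≤ M) : ‖a * t * star a + b * s * star b‖ ≤ M := by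
  have hM : 0 ≤ M := (norm_nonneg t).trans ht
  have hconj {r : A} (c : A) (hr : ‖r‖ ≤ M) :
      c * r * star (c * r) ≤ M ^ 2 • (c * star c) := by
    have hrM : ‖r * star r‖ ≤ M ^ 2 := by
      rw [CStarRing.norm_self_mul_star, ← sq]
      gcongr
    calc c * r * star (c * r) = c * (r * star r) * star c := by simp only [star_mul, mul_assoc]
      _ ≤ ‖r * star r‖ • (c * star c) := CStarAlgebra.star_right_conjugate_le_norm_smul
      _ ≤ M ^ 2 • (c * star c) := smul_le_smul_of_nonneg_right hrM (mul_star_self_nonneg c)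
  have hcol : ‖a * star a + b * star b‖ ≤ 1 :=
    (CStarAlgebra.norm_le_one_iff_of_nonneg _
      (add_nonneg (mul_star_self_nonneg a) (mul_star_self_nonneg b))).2 hab
  have hrow : ‖a * t * star (a * t) + b * s * star (b * s)‖ ≤ M ^ 2 :=
    calc _ ≤ ‖M ^ 2 • (a * star a + b * star b)‖ :=
          CStarAlgebra.norm_le_norm_of_nonneg_of_le
            (add_nonneg (mul_star_self_nonneg _) (mul_star_self_nonneg _))
            (by rw [smul_add]; exact add_le_add (hconj a ht) (hconj b hs))
      _ ≤ M ^ 2 := by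
          rw [norm_smul, Real.norm_of_nonneg (sq_nonneg M)]
          exact mul_le_of_le_one_right (sq_nonneg M) hcol
  calc _ ≤ √‖a * t * star (a * t) + b * s * star (b * s)‖ * √‖a * star a + b * star b‖ :=
        norm_mul_star_add_mul_star_le _ _ _ _
    _ ≤ M * 1 := by
        gcongr
        · exact Real.sqrt_le_iff.2 ⟨hM, hrow⟩
        · exact Real.sqrt_le_one.2 hcol
    _ = M := mul_one M

variable {A : Type*} [NonUnitalCStarAlgebra A]

/-- The combination `w t w + (1 - w) s (1 - w)` of `t` and `s` with weight `w`, multiplied out so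
that it makes sense in an algebra without unit. With `w` in an approximate unit of `ker π`, it moves
the fibre of `t` to the fibre of `s` without increasing the norm. -/
def blend (w t s : A) : A := w * t * w + (s - w * s - s * w + w * s * w)

theorem map_blend {B : Type*} [NonUnitalCStarAlgebra B] (π : A →⋆ₙₐ[ℂ] B) {w : A} (hw : π w = 0)
    (t s : A) : π (blend w t s) = π s := by
  simp [blend, hw]

variable [PartialOrder A] [StarOrderedRing A]

theorem norm_blend_le {w t s : A} {M : ℝ} (hw₀ : 0 ≤ w) (hw₁ : ‖w‖ ≤ 1) (ht : ‖t‖ ≤ M)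
    (hs : ‖s‖ ≤ M) : ‖blend w t s‖ ≤ M := by
  let v : Unitization ℂ A := w
  have hv₀ : 0 ≤ v := Unitization.inr_nonneg_iff.2 hw₀
  have hv₁ : v ≤ 1 := by
    rwa [← CStarAlgebra.norm_le_one_iff_of_nonneg _ hv₀, Unitization.norm_inr]
  have hv : star v = v := hv₀.star_eq
  have hv' : star (1 - v) = 1 - v := by rw [star_sub, star_one, hv]
  have hcomm : 0 ≤ v * (1 - v) :=
    ((Commute.one_right v).sub_right (.refl v)).mul_nonneg hv₀ (sub_nonneg.2 hv₁)
  have hpart : v * star v + (1 - v) * star (1 - v) ≤ 1 := by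
    rw [hv, hv', ← sub_nonneg]
    convert add_nonneg hcomm hcomm using 1
    noncomm_ring
  have h : ‖v * t * star v + (1 - v) * s * star (1 - v)‖ ≤ M :=
    norm_conjugate_add_conjugate_le hpart (by rwa [Unitization.norm_inr])
      (by rwa [Unitization.norm_inr])
  rw [← Unitization.norm_inr (𝕜 := ℂ)]
  convert h using 2
  rw [hv, hv', blend]
  push_cast
  noncomm_ring

theorem norm_sub_mul_left_le {w : A} (hw₀ : 0 ≤ w) (hw₁ : ‖w‖ ≤ 1) (y : A) :
    ‖y - w * y‖ ≤ ‖y‖ := by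
  refine CStarAlgebra.norm_sub_mul_self_le_of_inr y le_rfl hw₀ hw₁ (norm_nonneg y) ?_
  rw [Unitization.inr_zero, sub_zero, mul_one, CStarRing.norm_star_mul_self, Unitization.norm_inr,
    sq]

end Blend

section WeakApproximateUnit

variable {A : Type*} [NonUnitalCStarAlgebra A]

theorem norm_add_sq_le (x y : A) : ‖x + y‖ ^ 2 ≤ ‖x‖ ^ 2 + 2 * ‖star x * y‖ + ‖y‖ ^ 2 := by
  have hsymm : ‖star y * x‖ = ‖star x * y‖ := by
    rw [← norm_star, star_mul, star_star]
  calc ‖x + y‖ ^ 2 = ‖star x * x + star x * y + star y * x + star y * y‖ := by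
        rw [sq, ← CStarRing.norm_star_mul_self, star_add, mul_add, add_mul, add_mul]
        abel_nf
    _ ≤ ‖star x * x‖ + ‖star x * y‖ + ‖star y * x‖ + ‖star y * y‖ :=
        norm_add₄_le
    _ = ‖x‖ ^ 2 + 2 * ‖star x * y‖ + ‖y‖ ^ 2 := by
        simp only [CStarRing.norm_star_mul_self, hsymm]
        ring

theorem exists_norm_le_one_lt_apply {E : Type*} [NormedAddCommGroup E] [NormedSpace ℝ E]
    (f : StrongDual ℝ E) {r : ℝ} (hr : r < ‖f‖) : ∃ x, ‖x‖ ≤ 1 ∧ r < f x := by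
  obtain ⟨x, hx, hrx⟩ := f.exists_lt_apply_of_lt_opNorm hr
  rcases lt_abs.1 hrx with h | h
  · exact ⟨x, hx.le, h⟩
  · exact ⟨-x, (norm_neg x).trans_le hx.le, by rwa [map_neg]⟩

theorem apply_le_of_norm_star_mul_le (f : StrongDual ℝ A) {δ : ℝ} (hδ : 0 < δ) {x d : A}
    (hx : ‖x‖ ≤ 1) (hfx : ‖f‖ - δ ^ 2 ≤ f x) (hd : ‖d‖ ≤ 1) (hxd : ‖star x * d‖ ≤ δ / 2) :
    f d ≤ δ * (‖f‖ + 1) := by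
  have hsum : ‖x + δ • d‖ ^ 2 ≤ 1 + 2 * δ ^ 2 :=
    calc ‖x + δ • d‖ ^ 2 ≤ ‖x‖ ^ 2 + 2 * ‖star x * δ • d‖ + ‖δ • d‖ ^ 2 := norm_add_sq_le _ _
      _ = ‖x‖ ^ 2 + 2 * (δ * ‖star x * d‖) + (δ * ‖d‖) ^ 2 := by
          rw [mul_smul_comm, norm_smul, norm_smul, Real.norm_of_nonneg hδ.le]
      _ ≤ 1 ^ 2 + 2 * (δ * (δ / 2)) + (δ * 1) ^ 2 := by gcongr
      _ = 1 + 2 * δ ^ 2 := by ring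
  have hnorm : ‖x + δ • d‖ ≤ 1 + δ ^ 2 := by
    linarith [two_mul_le_add_sq ‖x + δ • d‖ 1]
  have hf : f x + δ * f d ≤ ‖f‖ * (1 + δ ^ 2) :=
    calc f x + δ * f d = f (x + δ • d) := by rw [map_add, map_smul, smul_eq_mul]
      _ ≤ ‖f‖ * ‖x + δ • d‖ := (le_abs_self _).trans (f.le_opNorm _)
      _ ≤ ‖f‖ * (1 + δ ^ 2) := by gcongr
  refine le_of_mul_le_mul_left ?_ hδ
  linarith

variable [PartialOrder A] [StarOrderedRing A] {l : Filter A}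

theorem tendsto_comp_mul_left (hl : l.IsIncreasingApproximateUnit) (f : StrongDual ℝ A) :
    Tendsto (fun w => f ∘L ContinuousLinearMap.mul ℝ A w) l (𝓝 f) := by
  refine tendsto_iff_norm_sub_tendsto_zero.2 (Metric.tendsto_nhds.2 fun ε hε => ?_)
  let δ := ε / 2 / (‖f‖ + 1)
  have hδ : 0 < δ := by positivity
  have hδε : δ * (‖f‖ + 1) = ε / 2 := div_mul_cancel₀ _ (by positivity)
  obtain ⟨x, hx, hfx⟩ := exists_norm_le_one_lt_apply f (sub_lt_self ‖f‖ (pow_pos hδ 2))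
  have hwx : ∀ᶠ w in l, ‖w * x - x‖ < δ / 2 :=
    (tendsto_iff_norm_sub_tendsto_zero.1 (hl.tendsto_mul_right x)).eventually_lt_const
      (half_pos hδ)
  filter_upwards [hl.eventually_nonneg, hl.eventually_norm, hl.eventually_star_eq, hwx]
    with w hw₀ hw₁ hw hwx
  have hle (y : A) (hy : ‖y‖ = 1) : f (y - w * y) ≤ ε / 2 := by
    have hxy : ‖star x * (y - w * y)‖ ≤ δ / 2 :=
      calc ‖star x * (y - w * y)‖ = ‖star (x - w * x) * y‖ := by
            rw [star_sub, star_mul, hw, mul_sub, sub_mul, mul_assoc]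
        _ ≤ ‖x - w * x‖ := by
            simpa only [norm_star, hy, mul_one] using norm_mul_le (star (x - w * x)) y
        _ ≤ δ / 2 := (norm_sub_rev _ _).trans_le hwx.le
    rw [← hδε]
    exact apply_le_of_norm_star_mul_le f hδ hx hfx.le
      ((norm_sub_mul_left_le hw₀ hw₁ y).trans hy.le) hxy
  rw [dist_zero_right, norm_norm]
  refine (ContinuousLinearMap.opNorm_le_of_unit_norm (half_pos hε).le fun y hy => ?_).trans_lt
    (half_lt_self hε)
  have hneg := hle (-y) ((norm_neg y).trans hy)
  rw [mul_neg, neg_sub_neg, map_sub] at hneg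
  have hpos := hle y hy
  rw [map_sub] at hpos
  exact abs_le.2 ⟨neg_le_of_neg_le (by simpa using hpos), by simpa using hneg⟩

theorem tendsto_apply_sub_mul_left (hl : l.IsIncreasingApproximateUnit) (f : StrongDual ℝ A)
    {y : A → A} {C : ℝ} (hy : ∀ᶠ w in l, ‖y w‖ ≤ C) :
    Tendsto (fun w => f (y w - w * y w)) l (𝓝 0) := by
  have hnorm := tendsto_iff_norm_sub_tendsto_zero.1 (tendsto_comp_mul_left hl f)
  refine squeeze_zero_norm' ?_ (by simpa only [zero_mul] using hnorm.mul_const C)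
  filter_upwards [hy] with w hyw
  calc ‖f (y w - w * y w)‖ = ‖(f ∘L ContinuousLinearMap.mul ℝ A w - f) (y w)‖ := by
        rw [map_sub, norm_sub_rev]
        rfl
    _ ≤ ‖f ∘L ContinuousLinearMap.mul ℝ A w - f‖ * C := ContinuousLinearMap.le_opNorm_of_le _ hyw

theorem tendsto_apply_sub_mul_right (hl : l.IsIncreasingApproximateUnit) (f : StrongDual ℝ A)
    {y : A → A} {C : ℝ} (hy : ∀ᶠ w in l, ‖y w‖ ≤ C) :
    Tendsto (fun w => f (y w - y w * w)) l (𝓝 0) := by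
  let fstar : StrongDual ℝ A := f ∘L (starL' ℝ : A ≃L[ℝ] A)
  have h := tendsto_apply_sub_mul_left hl fstar (y := fun w => star (y w)) (C := C)
    (by simpa only [norm_star] using hy)
  refine h.congr' ?_
  filter_upwards [hl.eventually_star_eq] with w hw
  simp [fstar, hw]

end WeakApproximateUnit

theorem mem_closure_of_tendsto_strongDual {E ι : Type*} [AddCommGroup E] [Module ℝ E]
    [TopologicalSpace E] [IsTopologicalAddGroup E] [ContinuousSMul ℝ E] [LocallyConvexSpace ℝ E]
    {C : Set E} (hC : Convex ℝ C) {l : Filter ι} [l.NeBot] {v : ι → E} {x : E}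
    (hv : ∀ᶠ i in l, v i ∈ C)
    (hx : ∀ f : StrongDual ℝ E, Tendsto (fun i => f (v i)) l (𝓝 (f x))) : x ∈ closure C := by
  by_contra hxC
  obtain ⟨f, u, hfx, hfC⟩ := geometric_hahn_banach_point_closed hC.closure isClosed_closure hxC
  refine hfx.not_ge (ge_of_tendsto (hx f) ?_)
  filter_upwards [hv] with i hi
  exact (hfC _ (subset_closure hi)).le

section StarKernel

variable {A B : Type*} [NonUnitalCStarAlgebra A] [NonUnitalCStarAlgebra B]

/-- The kernel of a `⋆`-homomorphism, bundled as a `⋆`-subalgebra of its domain so that it is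
a C⋆-algebra with approximate units of its own. -/
def starKernel (π : A →⋆ₙₐ[ℂ] B) : NonUnitalStarSubalgebra ℂ A :=
  NonUnitalStarAlgHom.equalizer π 0

variable {π : A →⋆ₙₐ[ℂ] B}

theorem mem_starKernel {a : A} : a ∈ starKernel π ↔ π a = 0 :=
  NonUnitalStarAlgHom.mem_equalizer π 0 a

theorem map_coe_starKernel (w : starKernel π) : π (w : A) = 0 :=
  mem_starKernel.1 w.2

instance isClosed_starKernel : IsClosed (starKernel π : Set A) :=
  isClosed_eq (map_continuous π) continuous_const

theorem mul_mem_starKernel (w : starKernel π) (a : A) : (w * a : A) ∈ starKernel π := by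
  rw [mem_starKernel, map_mul, map_coe_starKernel, zero_mul]

theorem mul_mem_starKernel' (a : A) (w : starKernel π) : (a * w : A) ∈ starKernel π := by
  rw [mem_starKernel, map_mul, map_coe_starKernel, mul_zero]

variable [PartialOrder A] [StarOrderedRing A]

instance starOrderedRing_starKernel : StarOrderedRing (starKernel π) :=
  StarOrderedRing.of_nonneg_iff' (fun h z => add_le_add_right (α := A) h z) fun x => by
    constructor
    · intro (hx : 0 ≤ (x : A))
      obtain ⟨s, hs⟩ := CStarAlgebra.nonneg_iff_eq_star_mul_self.1 hx
      have hπs : star (π s) * π s = 0 := by rw [← map_star, ← map_mul, ← hs, map_coe_starKernel]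
      exact ⟨⟨s, mem_starKernel.2 (CStarRing.star_mul_self_eq_zero_iff _ |>.1 hπs)⟩,
        Subtype.ext hs⟩
    · rintro ⟨s, rfl⟩
      exact star_mul_self_nonneg (s : A)

variable {l : Filter (starKernel π)}

theorem tendsto_apply_blend_sub (hl : l.IsIncreasingApproximateUnit) (f : StrongDual ℝ A)
    (t s : A) :
    Tendsto (fun w : starKernel π => f (blend (w : A) t s - (t + (s - t - w * (s - t))))) l
      (𝓝 0) := by
  let fJ : StrongDual ℝ (starKernel π) :=
    f.domRestrict ((starKernel π).toSubmodule.restrictScalars ℝ)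
  let wt (w : starKernel π) : starKernel π := ⟨w * t, mul_mem_starKernel w t⟩
  let sw (w : starKernel π) : starKernel π := ⟨s * w, mul_mem_starKernel' s w⟩
  have hwt : ∀ᶠ w in l, ‖wt w‖ ≤ ‖t‖ := by
    filter_upwards [hl.eventually_norm] with w hw
    exact (norm_mul_le _ _).trans (mul_le_of_le_one_left (norm_nonneg t) hw)
  have hsw : ∀ᶠ w in l, ‖sw w‖ ≤ ‖s‖ := by
    filter_upwards [hl.eventually_norm] with w hw
    exact (norm_mul_le _ _).trans (mul_le_of_le_one_right (norm_nonneg s) hw)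
  have hlim : Tendsto (fun w => -(fJ (wt w - wt w * w) + fJ (sw w - w * sw w))) l (𝓝 0) := by
    simpa only [add_zero, neg_zero] using
      ((tendsto_apply_sub_mul_right hl fJ hwt).add (tendsto_apply_sub_mul_left hl fJ hsw)).neg
  refine hlim.congr fun w => ?_
  rw [← map_add, ← map_neg]
  refine congrArg f (?_ : -((w * t - w * t * w : A) + (s * w - w * (s * w))) = _)
  rw [blend]
  noncomm_ring

theorem eventually_norm_sub_mul_lt (hl : l.IsIncreasingApproximateUnit) {c : A} {r : ℝ}
    (hc : ‖π c‖ < r) : ∀ᶠ w : starKernel π in l, ‖c - w * c‖ < r := by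
  obtain ⟨c', hπ, hnorm⟩ := exists_map_eq_norm_eq π c
  let j : starKernel π := ⟨c - c', mem_starKernel.2 (by rw [map_sub, hπ, sub_self])⟩
  have hj : ∀ᶠ w in l, ‖w * j - j‖ < r - ‖π c‖ :=
    (tendsto_iff_norm_sub_tendsto_zero.1 (hl.tendsto_mul_right j)).eventually_lt_const
      (sub_pos.2 hc)
  filter_upwards [hl.eventually_nonneg, hl.eventually_norm, hj] with w hw₀ hw₁ hwj
  calc ‖c - w * c‖ = ‖((j - w * j : starKernel π) : A) + (c' - w * c')‖ := by
        simp only [j, NonUnitalStarSubalgebra.coe_sub, NonUnitalStarSubalgebra.coe_mul, mul_sub]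
        abel_nf
    _ ≤ ‖j - w * j‖ + ‖c' - w * c'‖ := norm_add_le _ _
    _ < (r - ‖π c‖) + ‖π c‖ := by
        rw [norm_sub_rev j]
        exact add_lt_add_of_lt_of_le hwj
          ((norm_sub_mul_left_le (w := (w : A)) hw₀ hw₁ c').trans_eq hnorm)
    _ = r := sub_add_cancel _ _

end StarKernel

section PointwiseLimit

theorem cauchySeq_apply_of_dense {𝕜 E F : Type*} [NontriviallyNormedField 𝕜]
    [SeminormedAddCommGroup E] [NormedSpace 𝕜 E] [SeminormedAddCommGroup F] [NormedSpace 𝕜 F]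
    {T : ℕ → E →L[𝕜] F} {M : ℝ} (hT : ∀ n, ‖T n‖ ≤ M) {S : Set E} (hS : Dense S)
    (hTS : ∀ x ∈ S, CauchySeq fun n => T n x) (x : E) : CauchySeq fun n => T n x := by
  have hM : 0 ≤ M := (norm_nonneg _).trans (hT 0)
  refine Metric.cauchySeq_iff.2 fun ε hε => ?_
  obtain ⟨y, hy, hxy⟩ := hS.exists_dist_lt x (show 0 < ε / 3 / (M + 1) by positivity)
  obtain ⟨N, hN⟩ := Metric.cauchySeq_iff.1 (hTS y hy) (ε / 3) (by positivity)
  have hclose (n : ℕ) : dist (T n x) (T n y) ≤ ε / 3 :=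
    calc dist (T n x) (T n y) ≤ M * dist x y := by
          rw [dist_eq_norm, dist_eq_norm, ← map_sub]
          exact (T n).le_of_opNorm_le (hT n) _
      _ ≤ (M + 1) * (ε / 3 / (M + 1)) := by
          gcongr
          exact (lt_add_one M).le
      _ = ε / 3 := mul_div_cancel₀ _ (by positivity)
  refine ⟨N, fun m hm n hn => ?_⟩
  calc dist (T m x) (T n x)
      ≤ dist (T m x) (T m y) + dist (T m y) (T n y) + dist (T n y) (T n x) := dist_triangle4 _ _ _ _
    _ < ε / 3 + ε / 3 + ε / 3 :=
        add_lt_add_of_lt_of_le (add_lt_add_of_le_of_lt (hclose m) (hN m hm n hn))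
          ((dist_comm _ _).trans_le (hclose n))
    _ = ε := add_thirds ε

theorem exists_tendsto_apply_of_dense {𝕜 E F : Type*} [NontriviallyNormedField 𝕜]
    [NormedAddCommGroup E] [NormedSpace 𝕜 E] [NormedAddCommGroup F] [NormedSpace 𝕜 F]
    [CompleteSpace F] {T : ℕ → E →L[𝕜] F} {M : ℝ} (hT : ∀ n, ‖T n‖ ≤ M) {S : Set E}
    (hS : Dense S) (hTS : ∀ x ∈ S, CauchySeq fun n => T n x) :
    ∃ T' : E →L[𝕜] F, (∀ x, Tendsto (fun n => T n x) atTop (𝓝 (T' x))) ∧ ‖T'‖ ≤ M := by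
  choose g hg using fun x =>
    cauchySeq_tendsto_of_complete (cauchySeq_apply_of_dense hT hS hTS x)
  have hbound (x : E) : ‖g x‖ ≤ M * ‖x‖ :=
    le_of_tendsto (hg x).norm (.of_forall fun n => (T n).le_of_opNorm_le (hT n) x)
  let T' : E →L[𝕜] F := (linearMapOfTendsto g (fun n => (T n : E →ₗ[𝕜] F))
    (tendsto_pi_nhds.2 hg)).mkContinuous M hbound
  exact ⟨T', hg, LinearMap.mkContinuous_norm_le _ ((norm_nonneg _).trans (hT 0)) hbound⟩

theorem exists_tendsto_mul_of_dense {𝕜 A : Type*} [NontriviallyNormedField 𝕜]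
    [NonUnitalNormedRing A] [NormedSpace 𝕜 A] [IsScalarTower 𝕜 A A] [SMulCommClass 𝕜 A A]
    [CompleteSpace A] {e : A} (he : Dense (Set.range (e * ·)))
    {t : ℕ → A} {M : ℝ} (ht : ∀ n, ‖t n‖ ≤ M)
    (hte : CauchySeq fun n => t n * e) :
    ∃ L' : A →L[𝕜] A, (∀ a, Tendsto (fun n => t n * a) atTop (𝓝 (L' a))) ∧ ‖L'‖ ≤ M := by
  refine exists_tendsto_apply_of_dense (T := fun n => ContinuousLinearMap.mul 𝕜 A (t n))
    (fun n => (ContinuousLinearMap.opNorm_mul_apply_le 𝕜 A _).trans (ht n)) he ?_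
  rintro _ ⟨a, rfl⟩
  have h := ((ContinuousLinearMap.mul 𝕜 A).flip a).uniformContinuous.comp_cauchySeq hte
  simpa only [Function.comp_def, ContinuousLinearMap.flip_apply, ContinuousLinearMap.mul_apply',
    mul_assoc] using h

end PointwiseLimit

section LeftCentralizer

variable {A B : Type*} [NonUnitalCStarAlgebra A] [NonUnitalCStarAlgebra B]

theorem convex_closedBall_inter_preimage_singleton (π : A →⋆ₙₐ[ℂ] B) (M : ℝ) (b : B) :
    Convex ℝ (closedBall 0 M ∩ π ⁻¹' {b}) :=
  (convex_closedBall 0 M).inter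
    ((convex_singleton b).linear_preimage ((π : A →ₗ[ℂ] B).restrictScalars ℝ))

theorem exists_norm_le_map_eq_norm_sub_mul_lt (π : A →⋆ₙₐ[ℂ] B) {t s e : A} {M η : ℝ}
    (ht : ‖t‖ ≤ M) (hs : ‖π s‖ ≤ M) (hη : ‖π ((s - t) * e)‖ < η) :
    ∃ t', ‖t'‖ ≤ M ∧ π t' = π s ∧ ‖(t' - t) * e‖ < η := by
  obtain ⟨s', hπs, hs'⟩ := exists_map_eq_norm_eq π s
  obtain ⟨r, hr, hrη⟩ := exists_between hη
  let _ : PartialOrder A := CStarAlgebra.spectralOrder A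
  have _ : StarOrderedRing A := CStarAlgebra.spectralOrderedRing A
  let l := CStarAlgebra.approximateUnit (starKernel π)
  have hl : l.IsIncreasingApproximateUnit := CStarAlgebra.increasingApproximateUnit _
  have _ : l.NeBot := hl.neBot
  let C : Set A := (· * e) '' (closedBall 0 M ∩ π ⁻¹' {π s}) - closedBall (t * e) r
  have hC : Convex ℝ C := ((convex_closedBall_inter_preimage_singleton π M (π s)).linear_image
    (LinearMap.mulRight ℝ e)).sub (convex_closedBall _ _)
  have hr' : ‖π ((s' - t) * e)‖ < r := by rwa [map_mul, map_sub, hπs, ← map_sub, ← map_mul]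
  have hmem : ∀ᶠ w : starKernel π in l,
      (blend (w : A) t s' - (t + (s' - t - w * (s' - t)))) * e ∈ C := by
    filter_upwards [hl.eventually_nonneg, hl.eventually_norm, eventually_norm_sub_mul_lt hl hr']
      with w hw₀ hw₁ hwr
    rw [sub_mul]
    refine Set.sub_mem_sub (Set.mem_image_of_mem _ ⟨?_, ?_⟩) ?_
    · exact mem_closedBall_zero_iff.2
        (norm_blend_le hw₀ hw₁ ht (hs'.trans_le hs))
    · exact (map_blend π (map_coe_starKernel w) t s').trans hπs
    · rw [mem_closedBall_iff_norm, add_mul, add_sub_cancel_left, sub_mul, mul_assoc]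
      exact hwr.le
  have hzero : (0 : A) ∈ closure C := by
    refine mem_closure_of_tendsto_strongDual hC hmem fun f => ?_
    rw [map_zero]
    exact tendsto_apply_blend_sub hl (f ∘L (ContinuousLinearMap.mul ℝ A).flip e) t s'
  obtain ⟨_, ⟨_, ⟨t', ⟨ht'M, ht'π⟩, rfl⟩, z, hz, rfl⟩, hdist⟩ :=
    Metric.mem_closure_iff.1 hzero (η - r) (sub_pos.2 hrη)
  refine ⟨t', mem_closedBall_zero_iff.1 ht'M, ht'π, ?_⟩
  rw [dist_zero_left] at hdist
  calc ‖(t' - t) * e‖ = ‖t' * e - z + (z - t * e)‖ := by rw [sub_add_sub_cancel, sub_mul]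
    _ ≤ ‖t' * e - z‖ + ‖z - t * e‖ := norm_add_le _ _
    _ < (η - r) + r := add_lt_add_of_lt_of_le hdist (mem_closedBall_iff_norm.1 hz)
    _ = η := sub_add_cancel _ _

theorem exists_norm_mul_sub_lt_of_leftCentralizer (L : B →L[ℂ] B)
    (hL : ∀ b b', L (b * b') = L b * b') (x : B) {ε : ℝ} (hε : 0 < ε) :
    ∃ b, ‖b‖ ≤ ‖L‖ ∧ ‖b * x - L x‖ < ε := by
  let _ : PartialOrder B := CStarAlgebra.spectralOrder B
  have _ : StarOrderedRing B := CStarAlgebra.spectralOrderedRing B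
  have hl := CStarAlgebra.increasingApproximateUnit B
  have _ := hl.neBot
  have hlim : Tendsto (fun v => L v * x) (CStarAlgebra.approximateUnit B) (𝓝 (L x)) := by
    simpa only [Function.comp_def, hL] using (L.continuous.tendsto x).comp (hl.tendsto_mul_right x)
  obtain ⟨v, hv, hvx⟩ := (hl.eventually_norm.and
    ((tendsto_iff_norm_sub_tendsto_zero.1 hlim).eventually_lt_const hε)).exists
  exact ⟨L v, L.le_of_opNorm_le_of_le le_rfl hv |>.trans_eq (mul_one _), hvx⟩

theorem exists_seq_lift {π : A →⋆ₙₐ[ℂ] B} (hπ : Function.Surjective π) {e : A} {M : ℝ}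
    {b : ℕ → B} {η : ℕ → ℝ} (hb : ∀ n, ‖b n‖ ≤ M)
    (hη : ∀ n, ‖(b (n + 1) - b n) * π e‖ < η n) :
    ∃ t : ℕ → A, ∀ n, ‖t n‖ ≤ M ∧ π (t n) = b n ∧ ‖(t (n + 1) - t n) * e‖ < η n := by
  have hlift (n : ℕ) (t : {t // ‖t‖ ≤ M ∧ π t = b n}) :
      ∃ t' : {t // ‖t‖ ≤ M ∧ π t = b (n + 1)}, ‖(t'.1 - t.1) * e‖ < η n := by
    obtain ⟨t, htM, htb⟩ := t
    obtain ⟨s, hs⟩ := hπ (b (n + 1))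
    have hst : ‖π ((s - t) * e)‖ < η n := by
      rw [map_mul, map_sub, hs, htb]
      exact hη n
    obtain ⟨t', ht'M, ht'π, ht'η⟩ :=
      exists_norm_le_map_eq_norm_sub_mul_lt π htM (hs ▸ hb (n + 1)) hst
    exact ⟨⟨t', ht'M, ht'π.trans hs⟩, ht'η⟩
  choose next hnext using hlift
  obtain ⟨a, ha⟩ := hπ (b 0)
  obtain ⟨t₀, ht₀π, ht₀⟩ := exists_map_eq_norm_eq π a
  let t (n : ℕ) : {t // ‖t‖ ≤ M ∧ π t = b n} :=
    n.rec ⟨t₀, by rw [ht₀, ha]; exact hb 0, ht₀π.trans ha⟩ next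
  refine ⟨fun n => (t n).1, fun n => ?_⟩
  exact ⟨(t n).2.1, (t n).2.2, hnext n (t n)⟩

theorem exists_seq_cauchySeq_mul {π : A →⋆ₙₐ[ℂ] B} (hπ : Function.Surjective π) (L : B →L[ℂ] B)
    (hL : ∀ b b', L (b * b') = L b * b') (e : A) :
    ∃ t : ℕ → A, (∀ n, ‖t n‖ ≤ ‖L‖) ∧ CauchySeq (fun n => t n * e) ∧
      Tendsto (fun n => π (t n * e)) atTop (𝓝 (L (π e))) := by
  choose b hbL hb using fun n : ℕ =>
    exists_norm_mul_sub_lt_of_leftCentralizer L hL (π e) (pow_pos (one_half_pos (α := ℝ)) n)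
  have hstep (n : ℕ) : ‖(b (n + 1) - b n) * π e‖ < 2 * (1 / 2) ^ n :=
    calc ‖(b (n + 1) - b n) * π e‖ = ‖b (n + 1) * π e - L (π e) - (b n * π e - L (π e))‖ := by
          rw [sub_sub_sub_cancel_right, sub_mul]
      _ ≤ ‖b (n + 1) * π e - L (π e)‖ + ‖b n * π e - L (π e)‖ := norm_sub_le _ _
      _ < (1 / 2) ^ n + (1 / 2) ^ n := add_lt_add ((hb (n + 1)).trans_le
          (pow_le_pow_of_le_one one_half_pos.le one_half_lt_one.le n.le_succ)) (hb n)
      _ = 2 * (1 / 2) ^ n := (two_mul _).symm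
  obtain ⟨t, ht⟩ := exists_seq_lift hπ hbL hstep
  refine ⟨t, fun n => (ht n).1, cauchySeq_of_le_geometric (1 / 2) 2 one_half_lt_one fun n => ?_, ?_⟩
  · rw [dist_comm, dist_eq_norm, ← sub_mul]
    exact (ht n).2.2.le
  · simp only [map_mul, (ht _).2.1]
    refine tendsto_iff_norm_sub_tendsto_zero.2 (squeeze_zero (fun n => norm_nonneg _)
      (fun n => (hb n).le) (tendsto_pow_atTop_nhds_zero_of_lt_one one_half_pos.le one_half_lt_one))

end LeftCentralizer

theorem stmt11 {A B : Type*} [NonUnitalCStarAlgebra A] [NonUnitalCStarAlgebra B]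
    -- `π : A → B` is a surjective ⋆-homomorphism
    (π : A →⋆ₙₐ[ℂ] B) (hsurj : Function.Surjective π)
    -- `A` is σ-unital
    (hσ : ∃ e : A, (∃ f : A, e = star f * f) ∧ Dense (Set.range fun a : A => e * a))
    -- `L` is a (bounded) left centralizer of `B`
    (L : B →L[ℂ] B) (hL : ∀ b b' : B, L (b * b') = L b * b') :
    ∃ L' : A →L[ℂ] A,
      (∀ a a' : A, L' (a * a') = L' a * a') ∧
      (∀ a : A, π (L' a) = L (π a)) ∧
      ‖L'‖ = ‖L‖ := by
  obtain ⟨e, -, he⟩ := hσ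
  obtain ⟨t, htL, hte, hπt⟩ := exists_seq_cauchySeq_mul hsurj L hL e
  obtain ⟨L', hL', hnorm⟩ := exists_tendsto_mul_of_dense (𝕜 := ℂ) he htL hte
  have hmul (a a' : A) : L' (a * a') = L' a * a' :=
    tendsto_nhds_unique (hL' (a * a')) (by simpa only [mul_assoc] using (hL' a).mul_const a')
  have hπe : π (L' e) = L (π e) :=
    tendsto_nhds_unique (((map_continuous π).tendsto _).comp (hL' e)) hπt
  have hπL : ∀ a, π (L' a) = L (π a) := congrFun <| Continuous.ext_on he
    ((map_continuous π).comp L'.continuous) (L.continuous.comp (map_continuous π)) <| by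
      rintro _ ⟨a, rfl⟩
      simp only [hmul, map_mul, hπe, hL]
  refine ⟨L', hmul, hπL, hnorm.antisymm (L.opNorm_le_bound (norm_nonneg L') fun b => ?_)⟩
  obtain ⟨a₀, rfl⟩ := hsurj b
  obtain ⟨a, ha, hanorm⟩ := exists_map_eq_norm_eq π a₀
  calc ‖L (π a₀)‖ = ‖π (L' a)‖ := by rw [hπL, ha]
    _ ≤ ‖L' a‖ := NonUnitalStarAlgHom.norm_apply_le π _
    _ ≤ ‖L'‖ * ‖π a₀‖ := hanorm ▸ L'.le_opNorm a
end
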